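/- Let φ: ℕ → (0,∞) be a positive function with liminf_{n→∞} (log φ(n))/n = log B for some B with 1 < B < ∞. Then the Hausdorff dimension of F₂(φ) equals s_B. -/

import Mathlib

/-!
Write `fe s = 3s - 1 - s²` and `Z_n(s) = Σ q_n^(-2s)`, so that the pressure is
`lim (1/n) log Z_n(s) - fe s * log B`. Since `Z_n(1)` is bounded and `Z_n(s) = ∞` for `s ≤ 1/2`, the
number `s_B` lies in `[1/2, 1]`.

Upper bound (`dimH_F2_le`). A point of `F₂(φ)` caught at time `n` has two products of consecutive
digits of size at least `M ≈ B^n`, either overlapping or disjoint. Covering according to whether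
the first digit of the overlapping triple exceeds `M^(1-s)` and the second one exceeds `M^s`
(`hcont_adj`, `hcont_far`) bounds the `s`-dimensional content of the points with overlapping products
after `k` digits by about `Z_k(s) M^(-fe s)`, and for disjoint products with `j` digits in between by
about `Z_k(s) Z_j(s) M^(-fe s)`. Above an exponent of nonpositive pressure this is summable over the
`O(n²)` positions and over `n` (`Zs_decay`), so the Hausdorff measure vanishes.

Lower bound (`le_dimH_F2`). If the pressure at `s` is positive, finitely many block words carry a
partition sum exceeding `b^(fe s * length)` for some `b > B` (`exists_blocks`). A random continued
fraction is built by concatenating random blocks; whenever enough mass has been gained and a time `n`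
with `φ n ≤ β^n` is available (`B < β < b`), three large random digits of sizes `M^(1-s)`, `M^s`,
`M^(1-s)` with `M = β^n` are inserted (`exists_schedule`). Their total cost in the ratio between
the mass of a cylinder and the `s`-th power of its size is compensated by the mass gained, so the
ratio stays bounded, and the mass distribution principle (`Moran.le_dimH`) gives dimension at least
`s`. By construction both products `M^(1-s) M^s` are at least `φ n` infinitely often
(`limSet_subset_F2`).
-/

open scoped ENNReal
open MeasureTheory Filter

/-- The Gauss map `T(x) = 1/x - ⌊1/x⌋`. -/
noncomputable def gaussMap (x : ℝ) : ℝ := 1 / x - ⌊1 / x⌋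

/-- The `n`-th partial quotient `a_n(x) = ⌊1 / T^{n-1}(x)⌋` (for `n ≥ 1`). -/
noncomputable def pq (x : ℝ) (n : ℕ) : ℕ := ⌊1 / (gaussMap^[n - 1] x)⌋₊

/-- The set `F₂(φ)` of irrational `x ∈ (0,1)` such that for infinitely many `n` there are
`1 ≤ k ≠ l ≤ n` with `a_k a_{k+1} ≥ φ(n)` and `a_l a_{l+1} ≥ φ(n)`. -/
def F2 (φ : ℕ → ℝ) : Set ℝ :=
  {x | x ∈ Set.Ioo (0 : ℝ) 1 ∧ Irrational x ∧
    {n : ℕ | ∃ k l : ℕ, 1 ≤ k ∧ k ≤ n ∧ 1 ≤ l ∧ l ≤ n ∧ k ≠ l ∧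
      φ n ≤ (pq x k : ℝ) * (pq x (k + 1) : ℝ) ∧
      φ n ≤ (pq x l : ℝ) * (pq x (l + 1) : ℝ)}.Infinite}

/-- The continuant `q_n(a_1,…,a_n)` of a word, via `q_{-1} = 0`, `q_0 = 1`,
`q_n = a_n q_{n-1} + q_{n-2}` (the pair holds `(q_{k}, q_{k-1})`). -/
def contQ (l : List ℕ) : ℕ :=
  (l.foldl (fun p a => (a * p.1 + p.2, p.1)) ((1 : ℕ), (0 : ℕ))).1

/-- `Σ_{(a_1,…,a_n) ∈ ℕⁿ} B^{-n(3s-1-s²)} q_n(a_1,…,a_n)^{-2s}` as an extended nonnegative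
real number. -/
noncomputable def presSum (B s : ℝ) (n : ℕ) : ℝ≥0∞ :=
  ∑' v : Fin n → ℕ+,
    ENNReal.ofReal (B ^ (-(n : ℝ) * (3 * s - 1 - s ^ 2)) *
      (contQ (List.ofFn fun i => ((v i : ℕ))) : ℝ) ^ (-(2 * s)))

/-- The pressure function `P_B(s) = lim_n (1/n) log presSum B s n ∈ (-∞,∞]`
(the limit exists, hence equals the `limsup`). -/
noncomputable def pressure (B s : ℝ) : EReal :=
  Filter.atTop.limsup fun n : ℕ => (((n : ℝ)⁻¹ : ℝ) : EReal) * ENNReal.log (presSum B s n)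

/-- `s_B = inf {s ≥ 0 : P_B(s) ≤ 0}`. -/
noncomputable def sB (B : ℝ) : ℝ := sInf {s : ℝ | 0 ≤ s ∧ pressure B s ≤ 0}

/-! ### Continuants and inverse branches of the Gauss map -/

/-- The continuant `q_{n-1}` of the word with its last letter removed; `0` for the empty word. -/
def contQ' (l : List ℕ) : ℕ :=
  (l.foldl (fun p a => (a * p.1 + p.2, p.1)) ((1 : ℕ), (0 : ℕ))).2

/-- The inverse branch `t ↦ [a_1, …, a_n + t]` of the `n`-th iterate of the Gauss map. -/
noncomputable def cylMap (w : List ℕ) (t : ℝ) : ℝ := w.foldr (fun a t => 1 / ((a : ℝ) + t)) t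

/-- All letters of the word are positive. -/
def PosW (w : List ℕ) : Prop := ∀ a ∈ w, 1 ≤ a

lemma PosW.append {u v : List ℕ} (hu : PosW u) (hv : PosW v) : PosW (u ++ v) := by
  intro a ha
  rcases List.mem_append.1 ha with h | h
  · exact hu a h
  · exact hv a h

lemma PosW.left {u v : List ℕ} (h : PosW (u ++ v)) : PosW u :=
  fun a ha => h a (List.mem_append_left _ ha)

lemma PosW.right {u v : List ℕ} (h : PosW (u ++ v)) : PosW v :=
  fun a ha => h a (List.mem_append_right _ ha)

lemma PosW.nil : PosW [] := by intro a ha; simp at ha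

lemma PosW.cons {a : ℕ} {v : List ℕ} (ha : 1 ≤ a) (hv : PosW v) : PosW (a :: v) := by
  intro b hb
  rcases List.mem_cons.1 hb with h | h
  · omega
  · exact hv b h

lemma posW_ofFn {n : ℕ} (v : Fin n → ℕ+) : PosW (List.ofFn fun i => (v i : ℕ)) := by
  intro a ha
  obtain ⟨i, rfl⟩ := (List.mem_ofFn' _ _).1 ha
  exact (v i).pos

@[simp] lemma contQ_nil : contQ [] = 1 := rfl
@[simp] lemma contQ'_nil : contQ' [] = 0 := rfl

lemma contQ_concat (u : List ℕ) (a : ℕ) : contQ (u ++ [a]) = a * contQ u + contQ' u := by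
  simp [contQ, contQ', List.foldl_append]

lemma contQ'_concat (u : List ℕ) (a : ℕ) : contQ' (u ++ [a]) = contQ u := by
  simp [contQ, contQ', List.foldl_append]

lemma contQ_single (a : ℕ) : contQ [a] = a := by simp [contQ]

lemma contQ_pos_and {u : List ℕ} (hu : PosW u) : 1 ≤ contQ u ∧ contQ' u ≤ contQ u := by
  induction u using List.reverseRecOn with
  | nil => simp
  | append_singleton u a ih =>
    obtain ⟨h1, h2⟩ := ih hu.left
    have ha : 1 ≤ a := hu.right a (by simp)
    rw [contQ_concat, contQ'_concat]
    constructor <;> nlinarith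

lemma contQ_pos {u : List ℕ} (hu : PosW u) : 1 ≤ contQ u := (contQ_pos_and hu).1

lemma contQ'_le {u : List ℕ} (hu : PosW u) : contQ' u ≤ contQ u := (contQ_pos_and hu).2

/-- The bilinear formula for the continuant of a concatenation. For nonempty `v`, the witness `r` is the
continuant of `v` without its first letter; the other clauses keep the induction on `v` going. -/
lemma contQ_append_aux (u : List ℕ) {v : List ℕ} (hv : PosW v) :
    ∃ r r' : ℕ, contQ (u ++ v) = contQ u * contQ v + contQ' u * r ∧
      contQ' (u ++ v) = contQ u * contQ' v + contQ' u * r' ∧ r ≤ contQ v ∧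
      (v ≠ [] → r' ≤ contQ' v) ∧ (v = [] → r = 0 ∧ r' = 1) := by
  induction v using List.reverseRecOn with
  | nil => exact ⟨0, 1, by simp⟩
  | append_singleton v b ih =>
    obtain ⟨r, r', h1, h2, h3, h4, h5⟩ := ih hv.left
    have hb : 1 ≤ b := hv.right b (by simp)
    refine ⟨b * r + r', r, ?_, ?_, ?_, ?_, ?_⟩
    · rw [← List.append_assoc, contQ_concat, contQ_concat, h1, h2]; ring
    · rw [← List.append_assoc, contQ'_concat, contQ'_concat, h1]
    · rw [contQ_concat]
      by_cases hv0 : v = []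
      · obtain ⟨rfl, rfl⟩ := h5 hv0
        subst hv0; simp; omega
      · have := h4 hv0
        nlinarith
    · intro _; rw [contQ'_concat]; exact h3
    · intro h; simp at h

lemma contQ_append_ge (u : List ℕ) {v : List ℕ} (hv : PosW v) :
    contQ u * contQ v ≤ contQ (u ++ v) := by
  obtain ⟨r, r', h1, -⟩ := contQ_append_aux u hv
  rw [h1]; exact Nat.le_add_right _ _

lemma contQ_append_le {u v : List ℕ} (hu : PosW u) (hv : PosW v) :
    contQ (u ++ v) ≤ 2 * (contQ u * contQ v) := by
  obtain ⟨r, r', h1, -, h3, -⟩ := contQ_append_aux u hv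
  have := Nat.mul_le_mul (contQ'_le hu) h3
  omega

@[simp] lemma cylMap_nil (t : ℝ) : cylMap [] t = t := rfl

lemma cylMap_cons (a : ℕ) (w : List ℕ) (t : ℝ) :
    cylMap (a :: w) t = 1 / ((a : ℝ) + cylMap w t) := rfl

lemma cylMap_append (u v : List ℕ) (t : ℝ) :
    cylMap (u ++ v) t = cylMap u (cylMap v t) := by
  simp [cylMap, List.foldr_append]

lemma cylMap_nonneg (w : List ℕ) {t : ℝ} (ht : 0 ≤ t) : 0 ≤ cylMap w t := by
  induction w with
  | nil => simpa
  | cons a w ih => rw [cylMap_cons]; positivity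

lemma cylMap_mem_Icc {w : List ℕ} (hw : PosW w) {t : ℝ} (ht : t ∈ Set.Icc (0 : ℝ) 1) :
    cylMap w t ∈ Set.Icc (0 : ℝ) 1 := by
  cases w with
  | nil => simpa
  | cons a w =>
    have h0 := cylMap_nonneg w ht.1
    have ha : (1 : ℝ) ≤ a := by exact_mod_cast hw a (by simp)
    rw [cylMap_cons]
    exact ⟨by positivity, by rw [div_le_one (by positivity)]; linarith⟩

lemma cylMap_mem_Ioo {w : List ℕ} (hw : PosW w) {t : ℝ} (ht : t ∈ Set.Ioo (0 : ℝ) 1) :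
    cylMap w t ∈ Set.Ioo (0 : ℝ) 1 := by
  induction w with
  | nil => simpa
  | cons a w ih =>
    have h0 := (ih (fun b hb => hw b (by simp [hb]))).1
    have ha : (1 : ℝ) ≤ a := by exact_mod_cast hw a (by simp)
    rw [cylMap_cons]
    exact ⟨by positivity, by rw [div_lt_one (by positivity)]; linarith⟩

/-- The exact distortion formula for the inverse branches. -/
lemma cylMap_sub {w : List ℕ} (hw : PosW w) {t t' : ℝ} (ht : 0 ≤ t) (ht' : 0 ≤ t') :
    |cylMap w t - cylMap w t'| =
      |t - t'| / ((contQ w + contQ' w * t) * (contQ w + contQ' w * t')) := by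
  induction w using List.reverseRecOn generalizing t t' with
  | nil => simp
  | append_singleton u a ih =>
    have ha : (1 : ℝ) ≤ a := by exact_mod_cast hw.right a (by simp)
    have hq : (1 : ℝ) ≤ contQ u := by exact_mod_cast contQ_pos hw.left
    have hq' : (0 : ℝ) ≤ contQ' u := by positivity
    have h1 : 0 < (a : ℝ) + t := by linarith
    have h2 : 0 < (a : ℝ) + t' := by linarith
    rw [cylMap_append, cylMap_append, cylMap_cons, cylMap_cons, cylMap_nil, cylMap_nil,
      ih hw.left (by positivity) (by positivity), contQ_concat, contQ'_concat]
    have h3 : 1 / ((a : ℝ) + t) - 1 / (a + t') = (t' - t) / ((a + t) * (a + t')) := by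
      field_simp; ring
    rw [h3, abs_div, abs_of_pos (mul_pos h1 h2), abs_sub_comm, div_div]
    congr 1
    push_cast
    field_simp
    ring

lemma cylMap_sub_le {w : List ℕ} (hw : PosW w) {t t' : ℝ} (ht : 0 ≤ t) (ht' : 0 ≤ t') :
    |cylMap w t - cylMap w t'| ≤ |t - t'| / (contQ w : ℝ) ^ 2 := by
  rw [cylMap_sub hw ht ht']
  have hq : (1 : ℝ) ≤ contQ w := by exact_mod_cast contQ_pos hw
  have h1 : (0 : ℝ) ≤ contQ' w * t := by positivity
  have h2 : (0 : ℝ) ≤ contQ' w * t' := by positivity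
  apply div_le_div_of_nonneg_left (abs_nonneg _) (by positivity)
  nlinarith

lemma le_cylMap_sub {w : List ℕ} (hw : PosW w) {t t' : ℝ} (ht : t ∈ Set.Icc (0 : ℝ) 1)
    (ht' : t' ∈ Set.Icc (0 : ℝ) 1) :
    |t - t'| / (4 * (contQ w : ℝ) ^ 2) ≤ |cylMap w t - cylMap w t'| := by
  rw [cylMap_sub hw ht.1 ht'.1]
  have hq : (1 : ℝ) ≤ contQ w := by exact_mod_cast contQ_pos hw
  have hq' : (contQ' w : ℝ) ≤ contQ w := by exact_mod_cast contQ'_le hw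
  have hq0 : (0 : ℝ) ≤ contQ' w := by positivity
  have a1 := ht.1
  have a2 := ht'.1
  have h1 : (contQ' w : ℝ) * t ≤ contQ w := by nlinarith [ht.2, ht.1]
  have h2 : (contQ' w : ℝ) * t' ≤ contQ w := by nlinarith [ht'.2, ht'.1]
  apply div_le_div_of_nonneg_left (abs_nonneg _)
  · positivity
  · have : ((contQ w : ℝ) + contQ' w * t) * (contQ w + contQ' w * t') ≤
        (2 * contQ w) * (2 * contQ w) := by
      apply mul_le_mul <;> first | positivity | linarith
    linarith

lemma floor_inv_add {a : ℕ} {t : ℝ} (ht : t ∈ Set.Ioo (0 : ℝ) 1) :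
    ⌊(a : ℝ) + t⌋ = (a : ℤ) := by
  rw [Int.floor_eq_iff]
  push_cast
  exact ⟨by linarith [ht.1], by linarith [ht.2]⟩

lemma gaussMap_branch {a : ℕ} {t : ℝ} (ht : t ∈ Set.Ioo (0 : ℝ) 1) :
    gaussMap (1 / ((a : ℝ) + t)) = t := by
  unfold gaussMap
  rw [one_div_one_div, floor_inv_add ht]
  push_cast; ring

lemma gaussMap_iter_cylMap {w : List ℕ} (hw : PosW w) {t : ℝ} (ht : t ∈ Set.Ioo (0 : ℝ) 1)
    {k : ℕ} (hk : k ≤ w.length) : gaussMap^[k] (cylMap w t) = cylMap (w.drop k) t := by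
  induction k generalizing w with
  | zero => simp
  | succ k ih =>
    cases w with
    | nil => simp at hk
    | cons a w =>
      have hw' : PosW w := fun b hb => hw b (by simp [hb])
      rw [Function.iterate_succ_apply, cylMap_cons, gaussMap_branch (cylMap_mem_Ioo hw' ht),
        List.drop_succ_cons]
      exact ih hw' (by simpa using hk)

lemma pq_cylMap {w : List ℕ} (hw : PosW w) {t : ℝ} (ht : t ∈ Set.Ioo (0 : ℝ) 1)
    {k : ℕ} (hk : k < w.length) : pq (cylMap w t) (k + 1) = w[k] := by
  unfold pq
  rw [Nat.add_sub_cancel, gaussMap_iter_cylMap hw ht hk.le, List.drop_eq_getElem_cons hk,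
    cylMap_cons, one_div_one_div]
  have hw' : PosW (w.drop (k + 1)) := fun b hb => hw b (List.mem_of_mem_drop hb)
  have := cylMap_mem_Ioo hw' ht
  rw [Nat.floor_eq_iff (by have := this.1; positivity)]
  exact ⟨by linarith [this.1], by linarith [this.2]⟩

/-- The Gauss orbit of a rational number in `(0,1)` reaches `0`. -/
lemma gaussMap_iter_rat (p : ℕ) : ∀ q : ℕ, 0 < p → p < q →
    ∃ n, gaussMap^[n] ((p : ℝ) / q) = 0 := by
  induction p using Nat.strong_induction_on with
  | _ p ih =>
    intro q hp hq
    have hp' : (0 : ℝ) < p := by exact_mod_cast hp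
    have key : gaussMap ((p : ℝ) / q) = ((q % p : ℕ) : ℝ) / p := by
      unfold gaussMap
      rw [one_div_div]
      have h1 : ⌊(q : ℝ) / p⌋ = ((q / p : ℕ) : ℤ) := by
        rw [← Nat.floor_div_eq_div (K := ℝ) q p, Int.natCast_floor_eq_floor (by positivity)]
      rw [h1]
      have h2 : (q : ℝ) = p * (q / p : ℕ) + (q % p : ℕ) := by
        exact_mod_cast (Nat.div_add_mod q p).symm
      rw [eq_div_iff hp'.ne', sub_mul, div_mul_cancel₀ _ hp'.ne']
      rw [Int.cast_natCast]
      linarith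
    rcases Nat.eq_zero_or_pos (q % p) with h0 | h0
    · exact ⟨1, by rw [Function.iterate_one, key, h0]; simp⟩
    · obtain ⟨n, hn⟩ := ih (q % p) (Nat.mod_lt _ hp) p h0 (Nat.mod_lt _ hp)
      exact ⟨n + 1, by rw [Function.iterate_succ_apply, key, hn]⟩

lemma irrational_of_orbit {x : ℝ} (hx : ∀ n, gaussMap^[n] x ∈ Set.Ioo (0 : ℝ) 1) :
    Irrational x := by
  rintro ⟨r, rfl⟩
  have h0 := hx 0
  simp only [Function.iterate_zero, id] at h0
  have hr0 : 0 < r := by exact_mod_cast h0.1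
  have hr1 : r < 1 := by exact_mod_cast h0.2
  have hnum : 0 < r.num := Rat.num_pos.2 hr0
  have hlt : r.num < r.den := Rat.num_lt_denom_iff.2 hr1
  have hcast : (r : ℝ) = ((r.num.toNat : ℕ) : ℝ) / (r.den : ℝ) := by
    conv_lhs => rw [← Rat.num_div_den r]
    push_cast
    congr 1
    have : ((r.num.toNat : ℕ) : ℤ) = r.num := Int.toNat_of_nonneg hnum.le
    exact_mod_cast this.symm
  obtain ⟨n, hn⟩ := gaussMap_iter_rat r.num.toNat r.den (by omega) (by omega)
  rw [← hcast] at hn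
  have := (hx n).1
  linarith

/-- Irrational points of the unit interval. -/
def IrrI (x : ℝ) : Prop := x ∈ Set.Ioo (0 : ℝ) 1 ∧ Irrational x

lemma IrrI.gauss {x : ℝ} (hx : IrrI x) : IrrI (gaussMap x) := by
  have hirr : Irrational (gaussMap x) := by
    unfold gaussMap
    have : Irrational (1 / x) := by
      rw [one_div]; exact irrational_inv_iff.2 hx.2
    exact this.sub_intCast _
  refine ⟨⟨?_, ?_⟩, hirr⟩
  · have h0 : 0 ≤ gaussMap x := Int.fract_nonneg (1 / x)
    exact lt_of_le_of_ne h0 (fun h => hirr ⟨0, by simpa using h⟩)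
  · exact Int.fract_lt_one (1 / x)

lemma IrrI.iter {x : ℝ} (hx : IrrI x) (n : ℕ) : IrrI (gaussMap^[n] x) := by
  induction n with
  | zero => exact hx
  | succ n ih => rw [Function.iterate_succ_apply']; exact ih.gauss

lemma IrrI.floor_cast {x : ℝ} (hx : IrrI x) :
    ((⌊1 / x⌋₊ : ℕ) : ℝ) = ((⌊1 / x⌋ : ℤ) : ℝ) := by
  have : (0 : ℝ) ≤ 1 / x := by have := hx.1.1; positivity
  rw [← Int.natCast_floor_eq_floor this]; rfl

lemma IrrI.eq_branch {x : ℝ} (hx : IrrI x) : x = 1 / ((pq x 1 : ℝ) + gaussMap x) := by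
  have h : (pq x 1 : ℝ) + gaussMap x = 1 / x := by
    unfold pq gaussMap
    simp only [Nat.sub_self, Function.iterate_zero, id]
    rw [hx.floor_cast]; ring
  rw [h, one_div_one_div]

lemma pq_gauss_iter (x : ℝ) (k n : ℕ) (hn : 1 ≤ n) : pq (gaussMap^[k] x) n = pq x (k + n) := by
  unfold pq
  rw [← Function.iterate_add_apply]
  congr 3
  omega

lemma IrrI.pq_pos {x : ℝ} (hx : IrrI x) (n : ℕ) : 1 ≤ pq x n := by
  unfold pq
  have h := (hx.iter (n - 1)).1
  apply Nat.le_floor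
  rw [Nat.cast_one, le_div_iff₀ h.1]
  linarith [h.2]

/-- Expansion of an irrational point along its own digits. -/
lemma IrrI.eq_cylMap {x : ℝ} (hx : IrrI x) (k : ℕ) :
    x = cylMap (List.ofFn fun i : Fin k => pq x (i + 1)) (gaussMap^[k] x) := by
  induction k generalizing x with
  | zero => simp
  | succ k ih =>
    rw [List.ofFn_succ, cylMap_cons, Function.iterate_succ_apply]
    conv_lhs => rw [hx.eq_branch]
    have h := ih hx.gauss
    have h2 : (fun i : Fin k => pq (gaussMap x) (i + 1)) =
        fun i : Fin k => pq x ((i.succ : Fin (k+1)) + 1) := by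
      funext i
      have := pq_gauss_iter x 1 (i + 1) (by omega)
      rw [Function.iterate_one] at this
      rw [this]; congr 1; simp; omega
    rw [h2] at h
    rw [← h]
    simp

/-- If the next digit is at least `X`, the point `T^k x` lies in `[0, 1/X]`. -/
lemma IrrI.gauss_iter_le {x : ℝ} (hx : IrrI x) (k : ℕ) {X : ℝ} (hX : 0 < X)
    (h : X ≤ pq x (k + 1)) : gaussMap^[k] x ∈ Set.Icc (0 : ℝ) (1 / X) := by
  have hk := (hx.iter k).1
  refine ⟨hk.1.le, ?_⟩
  have h1 : (pq x (k + 1) : ℝ) ≤ 1 / gaussMap^[k] x := by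
    unfold pq
    rw [Nat.add_sub_cancel]
    exact Nat.floor_le (by have := hk.1; positivity)
  rw [le_div_iff₀ hX]
  have := (le_div_iff₀ hk.1).1 (h.trans h1)
  linarith

/-! ### Partition functions and pressure -/

/-- The word of natural numbers underlying a tuple of positive integers. -/
def wd {n : ℕ} (v : Fin n → ℕ+) : List ℕ := List.ofFn fun i => (v i : ℕ)

lemma posW_wd {n : ℕ} (v : Fin n → ℕ+) : PosW (wd v) := posW_ofFn v

lemma one_le_q {w : List ℕ} (hw : PosW w) : (1 : ℝ) ≤ contQ w := by
  exact_mod_cast contQ_pos hw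

/-- The partition function `Z_n(s) = Σ q_n^{-2s}`. -/
noncomputable def Zs (s : ℝ) (n : ℕ) : ℝ≥0∞ :=
  ∑' v : Fin n → ℕ+, ENNReal.ofReal ((contQ (wd v) : ℝ) ^ (-(2 * s)))

/-- The exponent `3s - 1 - s²`. -/
noncomputable def fe (s : ℝ) : ℝ := 3 * s - 1 - s ^ 2

lemma presSum_eq {B : ℝ} (hB : 0 < B) (s : ℝ) (n : ℕ) :
    presSum B s n = ENNReal.ofReal (B ^ (-(n : ℝ) * fe s)) * Zs s n := by
  unfold presSum Zs
  rw [← ENNReal.tsum_mul_left]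
  congr 1
  funext v
  rw [ENNReal.ofReal_mul (by positivity)]
  rfl

lemma Zs_anti {s s' : ℝ} (h : s ≤ s') (n : ℕ) : Zs s' n ≤ Zs s n := by
  apply ENNReal.tsum_le_tsum
  intro v
  apply ENNReal.ofReal_le_ofReal
  exact Real.rpow_le_rpow_of_exponent_le (one_le_q (posW_wd v)) (by linarith)

lemma wd_append {k l : ℕ} (u : Fin k → ℕ+) (v : Fin l → ℕ+) :
    wd (Fin.append u v) = wd u ++ wd v := by
  unfold wd
  rw [← List.ofFn_fin_append]
  congr 1
  funext i
  refine Fin.addCases (fun i => ?_) (fun i => ?_) i <;> simp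

lemma Zs_add (s : ℝ) (k l : ℕ) : Zs s (k + l) =
    ∑' (u : Fin k → ℕ+) (v : Fin l → ℕ+),
      ENNReal.ofReal ((contQ (wd u ++ wd v) : ℝ) ^ (-(2 * s))) := by
  unfold Zs
  rw [← (Fin.appendEquiv k l).tsum_eq, ← ENNReal.tsum_prod]
  congr 1
  funext p
  rw [← wd_append]
  rfl

lemma Zs_mul (s : ℝ) (k l : ℕ) : Zs s k * Zs s l =
    ∑' (u : Fin k → ℕ+) (v : Fin l → ℕ+),
      ENNReal.ofReal (((contQ (wd u) : ℝ) * contQ (wd v)) ^ (-(2 * s))) := by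
  conv_lhs => unfold Zs
  rw [← ENNReal.tsum_mul_right]
  congr 1
  funext u
  rw [← ENNReal.tsum_mul_left]
  congr 1
  funext v
  rw [Real.mul_rpow (by positivity) (by positivity), ENNReal.ofReal_mul (by positivity)]

lemma Zs_add_le {s : ℝ} (hs : 0 ≤ s) (k l : ℕ) : Zs s (k + l) ≤ Zs s k * Zs s l := by
  rw [Zs_add, Zs_mul]
  refine ENNReal.tsum_le_tsum fun u => ENNReal.tsum_le_tsum fun v => ?_
  apply ENNReal.ofReal_le_ofReal
  have h1 := one_le_q (posW_wd u)
  have h2 := one_le_q (posW_wd v)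
  apply Real.rpow_le_rpow_of_nonpos (by positivity) _ (by linarith)
  exact_mod_cast contQ_append_ge (wd u) (posW_wd v)

lemma Zs_mul_le {s : ℝ} (hs : 0 ≤ s) (k l : ℕ) :
    Zs s k * Zs s l ≤ ENNReal.ofReal (2 ^ (2 * s)) * Zs s (k + l) := by
  rw [Zs_add, Zs_mul, ← ENNReal.tsum_mul_left]
  refine ENNReal.tsum_le_tsum fun u => ?_
  rw [← ENNReal.tsum_mul_left]
  refine ENNReal.tsum_le_tsum fun v => ?_
  rw [← ENNReal.ofReal_mul (by positivity)]
  apply ENNReal.ofReal_le_ofReal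
  have h1 := one_le_q (posW_wd u)
  have h2 := one_le_q (posW_wd v)
  have h3 := one_le_q ((posW_wd u).append (posW_wd v))
  have h4 : (contQ (wd u ++ wd v) : ℝ) ≤ 2 * (contQ (wd u) * contQ (wd v)) := by
    exact_mod_cast contQ_append_le (posW_wd u) (posW_wd v)
  have h5 := Real.rpow_le_rpow_of_nonpos (by linarith) h4 (by linarith : -(2 * s) ≤ 0)
  rw [Real.mul_rpow (by norm_num) (by positivity)] at h5
  have h6 : (2 : ℝ) ^ (2 * s) * 2 ^ (-(2 * s)) = 1 := by
    rw [← Real.rpow_add (by norm_num)]; simp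
  calc _ = (2 : ℝ) ^ (2 * s) * (2 ^ (-(2 * s)) *
        ((contQ (wd u) : ℝ) * contQ (wd v)) ^ (-(2 * s))) := by rw [← mul_assoc, h6, one_mul]
    _ ≤ _ := by gcongr

lemma Zs_one (s : ℝ) : Zs s 1 = ∑' a : ℕ+, ENNReal.ofReal ((a : ℝ) ^ (-(2 * s))) := by
  unfold Zs
  rw [← (Equiv.funUnique (Fin 1) ℕ+).symm.tsum_eq]
  congr 1
  funext a
  simp [wd, contQ_single]

lemma zeta_ne_top {p : ℝ} (hp : 1 < p) :
    ∑' a : ℕ+, ENNReal.ofReal ((a : ℝ) ^ (-p)) ≠ ⊤ := by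
  apply Summable.tsum_ofReal_ne_top
  exact summable_pnat_iff_summable_nat.2 (Real.summable_nat_rpow.2 (by linarith))

lemma zeta_eq_top {p : ℝ} (hp : p ≤ 1) :
    ∑' a : ℕ+, ENNReal.ofReal ((a : ℝ) ^ (-p)) = ⊤ := by
  by_contra h
  have h1 := ENNReal.summable_toReal h
  have h2 : Summable fun a : ℕ+ => ((a : ℕ) : ℝ) ^ (-p) := by
    refine h1.congr fun a => ?_
    rw [ENNReal.toReal_ofReal (by positivity)]
  have h3 := Real.summable_nat_rpow.1 (summable_pnat_iff_summable_nat.1 h2)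
  linarith

lemma Zs_ne_zero (s : ℝ) (n : ℕ) : Zs s n ≠ 0 := by
  intro h
  unfold Zs at h
  have h1 := ENNReal.tsum_eq_zero.1 h (fun _ => 1)
  rw [ENNReal.ofReal_eq_zero] at h1
  have := one_le_q (posW_wd (fun _ : Fin n => (1 : ℕ+)))
  have h2 : (0 : ℝ) < (contQ (wd (fun _ : Fin n => (1 : ℕ+))) : ℝ) ^ (-(2 * s)) := by positivity
  linarith

/-- For `s ≤ 1/2` the sum over the first digit already diverges. -/
lemma Zs_top {s : ℝ} (hs0 : 0 ≤ s) (hs : s ≤ 1 / 2) {n : ℕ} (hn : 1 ≤ n) : Zs s n = ⊤ := by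
  obtain ⟨m, rfl⟩ := Nat.exists_eq_add_of_le hn
  have h := Zs_mul_le hs0 1 m
  rw [Zs_one, zeta_eq_top (by linarith), ENNReal.top_mul (Zs_ne_zero s m), top_le_iff] at h
  by_contra h2
  exact ENNReal.mul_ne_top ENNReal.ofReal_ne_top h2 h

lemma Zs_ne_top {s : ℝ} (hs : 1 / 2 < s) (n : ℕ) : Zs s n ≠ ⊤ := by
  induction n with
  | zero =>
    unfold Zs
    rw [tsum_eq_single (default : Fin 0 → ℕ+) (fun b hb => absurd (Subsingleton.elim _ _) hb)]
    exact ENNReal.ofReal_ne_top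
  | succ n ih =>
    refine ne_top_of_le_ne_top (ENNReal.mul_ne_top ih ?_) (Zs_add_le (by linarith) n 1)
    rw [Zs_one]
    exact zeta_ne_top (by linarith)

/-- The length `1 / (q (q + q'))` of the cylinder of a word. -/
noncomputable def cylLen (w : List ℕ) : ℝ := 1 / ((contQ w : ℝ) * (contQ w + contQ' w))

lemma tsum_cylLen_concat {w : List ℕ} (hw : PosW w) :
    ∑' a : ℕ+, ENNReal.ofReal (cylLen (w ++ [(a : ℕ)])) ≤ ENNReal.ofReal (cylLen w) := by
  rw [tsum_pnat_eq_tsum_succ (f := fun a : ℕ => ENNReal.ofReal (cylLen (w ++ [a])))]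
  have hq := one_le_q hw
  have hq' : (0 : ℝ) ≤ contQ' w := by positivity
  have hs : ∀ n : ℕ, ∑ i ∈ Finset.range n, cylLen (w ++ [i + 1]) =
      cylLen w - 1 / ((contQ w : ℝ) * ((n + 1) * contQ w + contQ' w)) := by
    intro n
    induction n with
    | zero => simp [cylLen]
    | succ n ih =>
      rw [Finset.sum_range_succ, ih]
      unfold cylLen
      rw [contQ_concat, contQ'_concat]
      push_cast
      have h1 : (0 : ℝ) < (n + 1) * contQ w + contQ' w := by positivity
      have h2 : (0 : ℝ) < (n + 1 + 1) * contQ w + contQ' w := by positivity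
      have h3 : ((n : ℝ) + 1) * contQ w + contQ' w + contQ w =
        (n + 1 + 1) * contQ w + contQ' w := by ring
      rw [h3]
      field_simp
      ring
  apply ENNReal.tsum_le_of_sum_range_le
  intro n
  rw [← ENNReal.ofReal_sum_of_nonneg (fun i _ => by unfold cylLen; positivity), hs]
  apply ENNReal.ofReal_le_ofReal
  have : (0 : ℝ) ≤ 1 / ((contQ w : ℝ) * ((n + 1) * contQ w + contQ' w)) := by positivity
  linarith

lemma tsum_cylLen (n : ℕ) : ∀ {w : List ℕ}, PosW w →
    ∑' v : Fin n → ℕ+, ENNReal.ofReal (cylLen (w ++ wd v)) ≤ ENNReal.ofReal (cylLen w) := by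
  induction n with
  | zero =>
    intro w hw
    rw [tsum_eq_single (default : Fin 0 → ℕ+) (fun b hb => absurd (Subsingleton.elim _ _) hb)]
    simp [wd]
  | succ n ih =>
    intro w hw
    rw [← (Fin.consEquiv (fun _ : Fin (n + 1) => ℕ+)).tsum_eq, ENNReal.tsum_prod']
    refine le_trans (ENNReal.tsum_le_tsum fun a => ?_) (tsum_cylLen_concat hw)
    have hw' : PosW (w ++ [(a : ℕ)]) := hw.append (PosW.cons a.pos PosW.nil)
    refine le_trans (le_of_eq ?_) (ih hw')
    congr 1
    funext v
    congr 2
    simp [wd, Fin.consEquiv, List.ofFn_succ]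

lemma Zs_one_le (n : ℕ) : Zs 1 n ≤ 2 := by
  have h := tsum_cylLen n PosW.nil
  have h1 : cylLen [] = 1 := by simp [cylLen]
  rw [h1, ENNReal.ofReal_one] at h
  calc Zs 1 n ≤ ∑' v : Fin n → ℕ+, 2 * ENNReal.ofReal (cylLen ([] ++ wd v)) := by
        refine ENNReal.tsum_le_tsum fun v => ?_
        rw [show (2 : ℝ≥0∞) = ENNReal.ofReal 2 by simp, ← ENNReal.ofReal_mul (by norm_num)]
        apply ENNReal.ofReal_le_ofReal
        have hq := one_le_q (posW_wd v)
        have hq' : (contQ' (wd v) : ℝ) ≤ contQ (wd v) := by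
          exact_mod_cast contQ'_le (posW_wd v)
        unfold cylLen
        rw [List.nil_append, show (-(2 * (1 : ℝ))) = ((-2 : ℤ) : ℝ) by norm_num,
          Real.rpow_intCast, zpow_neg, ← one_div, mul_one_div,
          div_le_div_iff₀ (by positivity) (by positivity)]
        norm_cast at *
        nlinarith
    _ ≤ 2 * 1 := by rw [ENNReal.tsum_mul_left]; gcongr
    _ = 2 := by simp

lemma pressure_le_of {B s : ℝ} (h : pressure B s ≤ 0) {η : ℝ} (hη : 0 < η) :
    ∀ᶠ n : ℕ in atTop, presSum B s n ≤ ENNReal.ofReal (Real.exp (η * n)) := by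
  have h1 : pressure B s < (η : EReal) := lt_of_le_of_lt h (by exact_mod_cast hη)
  filter_upwards [eventually_lt_of_limsup_lt h1, eventually_ge_atTop 1] with n hn hn1
  by_contra hc
  push Not at hc
  have h2 := ENNReal.log_le_log_iff.2 hc.le
  rw [ENNReal.log_ofReal_of_pos (Real.exp_pos _), Real.log_exp] at h2
  have h3 : (0 : EReal) ≤ (((n : ℝ)⁻¹ : ℝ) : EReal) := by
    exact_mod_cast inv_nonneg.2 (Nat.cast_nonneg n)
  have h4 := mul_le_mul_of_nonneg_left h2 h3
  rw [← EReal.coe_mul] at h4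
  have h5 : (n : ℝ)⁻¹ * (η * n) = η := by
    have : (n : ℝ) ≠ 0 := by positivity
    field_simp
  rw [h5] at h4
  exact absurd hn (not_lt.2 h4)

lemma pressure_gt_of {B s : ℝ} (h : ¬ pressure B s ≤ 0) :
    ∃ η : ℝ, 0 < η ∧ ∃ᶠ n : ℕ in atTop,
      ENNReal.ofReal (Real.exp (η * n)) ≤ presSum B s n := by
  push Not at h
  obtain ⟨η, h1, h2⟩ := EReal.lt_iff_exists_real_btwn.1 h
  refine ⟨η, by exact_mod_cast h1, ?_⟩
  have h3 := (frequently_lt_of_lt_limsup (by isBoundedDefault) h2).and_eventually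
    (eventually_ge_atTop 1)
  refine h3.mono ?_
  rintro n ⟨hn, hn1⟩
  by_contra hc
  push Not at hc
  have h2 := ENNReal.log_le_log_iff.2 hc.le
  rw [ENNReal.log_ofReal_of_pos (Real.exp_pos _), Real.log_exp] at h2
  have h3 : (0 : EReal) ≤ (((n : ℝ)⁻¹ : ℝ) : EReal) := by
    exact_mod_cast inv_nonneg.2 (Nat.cast_nonneg n)
  have h4 := mul_le_mul_of_nonneg_left h2 h3
  rw [← EReal.coe_mul] at h4
  have h5 : (n : ℝ)⁻¹ * (η * n) = η := by
    have : (n : ℝ) ≠ 0 := by positivity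
    field_simp
  rw [h5] at h4
  exact absurd hn (not_lt.2 h4)

/-- Cylinders of a given length have total length at most `1`, so `Z_n(1)` stays bounded. -/
lemma pressure_one_le {B : ℝ} (hB : 1 < B) : pressure B 1 ≤ 0 := by
  by_contra hc
  obtain ⟨η, hη, hf⟩ := pressure_gt_of hc
  have ht : Tendsto (fun n : ℕ => Real.exp (η * n)) atTop atTop :=
    Real.tendsto_exp_atTop.comp (tendsto_natCast_atTop_atTop.const_mul_atTop hη)
  obtain ⟨n, h1, h2⟩ := (hf.and_eventually (ht.eventually_gt_atTop 2)).exists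
  rw [presSum_eq (by linarith)] at h1
  have h3 : B ^ (-(n : ℝ) * fe 1) ≤ 1 := by
    apply Real.rpow_le_one_of_one_le_of_nonpos hB.le
    unfold fe
    have : (0 : ℝ) ≤ n := by positivity
    linarith
  have h4 : ENNReal.ofReal (Real.exp (η * n)) ≤ 1 * 2 := by
    refine h1.trans (mul_le_mul' ?_ (Zs_one_le n))
    rw [← ENNReal.ofReal_one]
    exact ENNReal.ofReal_le_ofReal h3
  rw [one_mul, show (2 : ℝ≥0∞) = ENNReal.ofReal 2 by simp,
    ENNReal.ofReal_le_ofReal_iff (by norm_num)] at h4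
  linarith

lemma half_lt_of_pressure {B s : ℝ} (hB : 1 < B) (hs : 0 ≤ s) (h : pressure B s ≤ 0) :
    1 / 2 < s := by
  by_contra hc
  push Not at hc
  obtain ⟨n, h1, h2⟩ := ((pressure_le_of h one_pos).and (eventually_ge_atTop 1)).exists
  have hB0 : 0 < B := by linarith
  rw [presSum_eq hB0, Zs_top hs hc h2, ENNReal.mul_top] at h1
  · exact absurd h1 (by simp)
  · have : 0 < B ^ (-(n : ℝ) * fe s) := by positivity
    simpa using this

/-- Exponential decay of `Z_n(s) B^{-n f(s)}` strictly above an admissible exponent. -/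
lemma Zs_decay {B s₀ s : ℝ} (hB : 1 < B) (h : pressure B s₀ ≤ 0)
    (hss : s₀ < s) (hs1 : s ≤ 1) : ∃ δ > 0, ∀ᶠ n : ℕ in atTop,
      Zs s n ≤ ENNReal.ofReal (Real.exp ((fe s * Real.log B - δ) * n)) := by
  have hB0 : 0 < B := by linarith
  have hlog : 0 < Real.log B := Real.log_pos hB
  have hfe : 0 < fe s - fe s₀ := by
    have : fe s - fe s₀ = (s - s₀) * (3 - s - s₀) := by unfold fe; ring
    rw [this]; apply mul_pos <;> linarith
  refine ⟨(fe s - fe s₀) * Real.log B / 2, by positivity, ?_⟩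
  filter_upwards [pressure_le_of h (η := (fe s - fe s₀) * Real.log B / 2) (by positivity)]
    with n hn
  rw [presSum_eq hB0] at hn
  have h1 : ENNReal.ofReal (B ^ ((n : ℝ) * fe s₀)) * ENNReal.ofReal (B ^ (-(n : ℝ) * fe s₀)) = 1 := by
    rw [← ENNReal.ofReal_mul (by positivity), ← Real.rpow_add hB0]
    simp
  calc Zs s n ≤ Zs s₀ n := Zs_anti hss.le n
    _ = ENNReal.ofReal (B ^ ((n : ℝ) * fe s₀)) *
        (ENNReal.ofReal (B ^ (-(n : ℝ) * fe s₀)) * Zs s₀ n) := by rw [← mul_assoc, h1, one_mul]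
    _ ≤ ENNReal.ofReal (B ^ ((n : ℝ) * fe s₀)) *
        ENNReal.ofReal (Real.exp ((fe s - fe s₀) * Real.log B / 2 * n)) := by gcongr
    _ = _ := by
      rw [← ENNReal.ofReal_mul (by positivity), Real.rpow_def_of_pos hB0, ← Real.exp_add]
      congr 2
      ring

/-! ### Covers of the points with two large products -/

/-- The `s`-dimensional Hausdorff content on the line. -/
noncomputable def hcont (s : ℝ) (hs : 0 < s) : OuterMeasure ℝ :=
  OuterMeasure.ofFunction (fun A => Metric.ediam A ^ s) (by simp [hs])

/-- Covers of total `s`-size tending to `0` have meshes tending to `0`, so vanishing of the content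
suffices for vanishing of the Hausdorff measure. -/
lemma hausdorff_zero_of_hcont {s : ℝ} (hs : 0 < s) {A : Set ℝ} (h : hcont s hs A = 0) :
    Measure.hausdorffMeasure s A = 0 := by
  have h1 : ∀ n : ℕ, ∃ t : ℕ → Set ℝ, A ⊆ ⋃ i, t i ∧
      ∑' i, Metric.ediam (t i) ^ s < ((n : ℝ≥0∞) + 1)⁻¹ := by
    intro n
    have h2 : hcont s hs A < ((n : ℝ≥0∞) + 1)⁻¹ := by
      rw [h]; simp
    unfold hcont at h2
    rw [OuterMeasure.ofFunction_apply] at h2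
    simp only [iInf_lt_iff] at h2
    obtain ⟨t, ht, h3⟩ := h2
    exact ⟨t, ht, h3⟩
  choose t ht hsum using h1
  have htend : Tendsto (fun n : ℕ => ((n : ℝ≥0∞) + 1)⁻¹) atTop (nhds 0) := by
    have := (tendsto_add_atTop_iff_nat 1).2 ENNReal.tendsto_inv_nat_nhds_zero
    simpa using this
  have hr : Tendsto (fun n : ℕ => (((n : ℝ≥0∞) + 1)⁻¹) ^ (1 / s)) atTop (nhds 0) := by
    have := htend.ennrpow_const (1 / s)
    rwa [ENNReal.zero_rpow_of_pos (by positivity)] at this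
  have hm := Measure.hausdorffMeasure_le_liminf_tsum s A _ hr t
    (Eventually.of_forall fun n i => by
      have : Metric.ediam (t n i) ^ s ≤ ((n : ℝ≥0∞) + 1)⁻¹ :=
        (ENNReal.le_tsum i).trans (hsum n).le
      rw [one_div]
      exact (ENNReal.le_rpow_inv_iff hs).2 this)
    (Eventually.of_forall ht)
  rw [← nonpos_iff_eq_zero]
  refine hm.trans ?_
  refine (liminf_le_liminf (Eventually.of_forall fun n => (hsum n).le)).trans ?_
  rw [htend.liminf_eq]

/-- Content of the piece of the cylinder of `w` on which the next digit is at least `X = exp ξ`,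
when `contQ w ≥ exp K`. -/
lemma hcont_piece {s : ℝ} (hs : 0 < s) {w : List ℕ} (hw : PosW w) {K ξ X : ℝ}
    (hK : Real.exp K ≤ contQ w) (hX : X = Real.exp ξ) :
    hcont s hs (cylMap w '' Set.Icc 0 (1 / X)) ≤ ENNReal.ofReal (Real.exp (-s * (2 * K + ξ))) := by
  refine (OuterMeasure.ofFunction_le _).trans ?_
  have h1 : Metric.ediam (cylMap w '' Set.Icc 0 (1 / X)) ≤
      ENNReal.ofReal (Real.exp (-(2 * K + ξ))) := by
    apply Metric.ediam_le
    rintro _ ⟨t, ht, rfl⟩ _ ⟨t', ht', rfl⟩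
    rw [edist_dist, Real.dist_eq]
    apply ENNReal.ofReal_le_ofReal
    refine (cylMap_sub_le hw ht.1 ht'.1).trans ?_
    have h2 : |t - t'| ≤ 1 / X := by
      rw [abs_le]; constructor <;> linarith [ht.1, ht.2, ht'.1, ht'.2]
    have hX0 : 0 < X := by rw [hX]; exact Real.exp_pos _
    have h3 : Real.exp K ^ 2 ≤ (contQ w : ℝ) ^ 2 := by gcongr
    calc |t - t'| / (contQ w : ℝ) ^ 2 ≤ (1 / X) / Real.exp K ^ 2 := by gcongr
      _ = Real.exp (-(2 * K + ξ)) := by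
        rw [hX, Real.exp_neg, Real.exp_add, two_mul, Real.exp_add]
        field_simp
  calc _ ≤ (ENNReal.ofReal (Real.exp (-(2 * K + ξ)))) ^ s := by gcongr
    _ = _ := by
      rw [ENNReal.ofReal_rpow_of_pos (Real.exp_pos _), ← Real.exp_mul]
      congr 2; ring

lemma hcont_cond {s : ℝ} (hs : 0 < s) {c : Prop} {S : Set ℝ} {r : ℝ≥0∞}
    (h : c → hcont s hs S ≤ r) : hcont s hs {x | c ∧ x ∈ S} ≤ r := by
  by_cases hc : c
  · simpa [hc] using h hc
  · simp [hc]

/-- `Σ a^{-p}` as an extended nonnegative real. -/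
noncomputable def zt (p : ℝ) : ℝ≥0∞ := ∑' a : ℕ+, ENNReal.ofReal ((a : ℝ) ^ (-p))

lemma rpow_eq_exp_log (a : ℕ+) (p : ℝ) : ((a : ℝ)) ^ p = Real.exp (p * Real.log a) := by
  have : (0 : ℝ) < a := by exact_mod_cast a.pos
  rw [Real.rpow_def_of_pos this, mul_comm]

lemma pnat_log_nonneg (a : ℕ+) : 0 ≤ Real.log (a : ℝ) :=
  Real.log_nonneg (by exact_mod_cast a.pos)

lemma q_rpow_eq {k : ℕ} (u : Fin k → ℕ+) (s : ℝ) :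
    (contQ (wd u) : ℝ) ^ (-(2 * s)) = Real.exp (-(2 * s) * Real.log (contQ (wd u))) := by
  have : (0 : ℝ) < contQ (wd u) := by linarith [one_le_q (posW_wd u)]
  rw [Real.rpow_def_of_pos this, mul_comm]

/-- Points with two overlapping large products at positions `k+1, k+2, k+3`. -/
def AdjSet (M : ℝ) (k : ℕ) : Set ℝ :=
  {x | IrrI x ∧ M ≤ (pq x (k + 1) : ℝ) * pq x (k + 2) ∧ M ≤ (pq x (k + 2) : ℝ) * pq x (k + 3)}

/-- Points with two disjoint large products, separated by `j` free digits. -/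
def FarSet (M : ℝ) (k j : ℕ) : Set ℝ :=
  {x | IrrI x ∧ M ≤ (pq x (k + 1) : ℝ) * pq x (k + 2) ∧
    M ≤ (pq x (k + 2 + j + 1) : ℝ) * pq x (k + 2 + j + 2)}

/-- The digits `a_{k+1}, …, a_{k+n}` of an irrational point as a tuple of positive integers. -/
noncomputable def dig {x : ℝ} (hx : IrrI x) (k n : ℕ) : Fin n → ℕ+ :=
  fun i => ⟨pq x (k + i + 1), hx.pq_pos _⟩

/-- A single digit as a positive integer. -/
noncomputable def dg {x : ℝ} (hx : IrrI x) (k : ℕ) : ℕ+ := ⟨pq x k, hx.pq_pos _⟩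

lemma dg_coe {x : ℝ} (hx : IrrI x) (k : ℕ) : ((dg hx k : ℕ+) : ℕ) = pq x k := rfl

lemma IrrI.eq_cyl_dig {x : ℝ} (hx : IrrI x) (k n : ℕ) :
    gaussMap^[k] x = cylMap (wd (dig hx k n)) (gaussMap^[k + n] x) := by
  have h := (hx.iter k).eq_cylMap n
  rw [← Function.iterate_add_apply, Nat.add_comm n k] at h
  have h2 : (List.ofFn fun i : Fin n => pq (gaussMap^[k] x) (i + 1)) = wd (dig hx k n) := by
    unfold wd dig
    congr 1
    funext i
    rw [pq_gauss_iter _ _ _ (by omega)]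
    rfl
  rw [h2] at h
  exact h

lemma IrrI.eq_cyl_dg {x : ℝ} (hx : IrrI x) (k : ℕ) :
    gaussMap^[k] x = cylMap [(dg hx (k + 1) : ℕ)] (gaussMap^[k + 1] x) := by
  have h := hx.eq_cyl_dig k 1
  simpa [wd, dig, dg] using h

lemma exp_log_add_le {w : List ℕ} (hw : PosW w) (a : ℕ+) :
    Real.exp (Real.log (contQ w) + Real.log a) ≤ contQ (w ++ [(a : ℕ)]) := by
  have h1 : (0 : ℝ) < contQ w := by linarith [one_le_q hw]
  have h2 : (0 : ℝ) < a := by exact_mod_cast a.pos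
  rw [Real.exp_add, Real.exp_log h1, Real.exp_log h2]
  have := contQ_append_ge w (v := [(a : ℕ)]) (PosW.cons a.pos PosW.nil)
  rw [contQ_single] at this
  exact_mod_cast this

lemma log_add_le {w : List ℕ} (hw : PosW w) (a : ℕ+) :
    Real.log (contQ w) + Real.log a ≤ Real.log (contQ (w ++ [(a : ℕ)])) := by
  rw [← Real.log_exp (Real.log (contQ w) + Real.log a)]
  exact Real.log_le_log (Real.exp_pos _) (exp_log_add_le hw a)

lemma log_append_le {w v : List ℕ} (hw : PosW w) (hv : PosW v) :
    Real.log (contQ w) + Real.log (contQ v) ≤ Real.log (contQ (w ++ v)) := by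
  have h1 : (0 : ℝ) < contQ w := by linarith [one_le_q hw]
  have h2 : (0 : ℝ) < contQ v := by linarith [one_le_q hv]
  rw [← Real.log_mul h1.ne' h2.ne']
  exact Real.log_le_log (by positivity) (by exact_mod_cast contQ_append_ge w hv)

lemma posW_single (a : ℕ+) : PosW [(a : ℕ)] := PosW.cons a.pos PosW.nil

lemma exp_log_q {w : List ℕ} (hw : PosW w) {K : ℝ} (h : K ≤ Real.log (contQ w)) :
    Real.exp K ≤ contQ w := by
  have h1 : (0 : ℝ) < contQ w := by linarith [one_le_q hw]
  rw [← Real.exp_log h1]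
  exact Real.exp_le_exp.2 h

/-- Content of `AdjSet`. With `M = exp m`, the critical sizes of the three digits are `M^(1-s)`,
`M^s`, `M^(1-s)`, and this overlapping configuration is what produces the exponent `fe s`. -/
lemma hcont_adj {s ε m : ℝ} (hs : 1 / 2 < s) (hs1 : s < 1) (hε : 0 < ε) (hε2 : ε ≤ 2 * s - 1)
    (hm : 0 ≤ m) (k : ℕ) :
    hcont s (by linarith) (AdjSet (Real.exp m) k) ≤
      Zs s k * (ENNReal.ofReal (Real.exp ((-fe s + ε) * m)) *
        (zt (1 + ε) + (zt (1 + ε) * zt (1 + ε) + zt (1 + ε)))) := by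
  have hs0 : 0 < s := by linarith
  set H := hcont s hs0 with hH
  -- Stop after the first digit when it is below `M^(1-s)`; otherwise use the second digit,
  -- separately when it is below (`S2`) and above (`S3`) the threshold `M^s`.
  let S1 (u : Fin k → ℕ+) (a : ℕ+) : Set ℝ := {x | Real.log a ≤ (1 - s) * m ∧
    x ∈ cylMap (wd u ++ [(a : ℕ)]) '' Set.Icc 0 (1 / (Real.exp m / a))}
  let S2 (u : Fin k → ℕ+) (a b : ℕ+) : Set ℝ :=
    {x | ((1 - s) * m ≤ Real.log a ∧ Real.log b ≤ s * m) ∧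
    x ∈ cylMap (wd u ++ [(a : ℕ)] ++ [(b : ℕ)]) '' Set.Icc 0 (1 / (Real.exp m / b))}
  let S3 (u : Fin k → ℕ+) (a : ℕ+) : Set ℝ := {x | (1 - s) * m ≤ Real.log a ∧
    x ∈ cylMap (wd u ++ [(a : ℕ)]) '' Set.Icc 0 (1 / Real.exp (s * m))}
  have hexp : ∀ a : ℕ+, Real.exp m / a = Real.exp (m - Real.log a) := by
    intro a
    have h2 : (0 : ℝ) < a := by exact_mod_cast a.pos
    rw [Real.exp_sub, Real.exp_log h2]
  have hcover : AdjSet (Real.exp m) k ⊆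
      ⋃ u : Fin k → ℕ+, ((⋃ a, S1 u a) ∪ ((⋃ a, ⋃ b, S2 u a b) ∪ ⋃ a, S3 u a)) := by
    rintro x ⟨hx, h1, h2⟩
    refine Set.mem_iUnion.2 ⟨dig hx 0 k, ?_⟩
    have e0 := hx.eq_cyl_dig 0 k
    rw [Nat.zero_add, Function.iterate_zero, id] at e0
    have e1 := hx.eq_cyl_dg k
    have e2 := hx.eq_cyl_dg (k + 1)
    rw [e1, ← cylMap_append] at e0
    have e3 := e0
    rw [e2, ← cylMap_append] at e3
    have pa : (0 : ℝ) < (dg hx (k + 1) : ℕ+) := by exact_mod_cast (dg hx (k + 1)).pos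
    have pb : (0 : ℝ) < (dg hx (k + 2) : ℕ+) := by exact_mod_cast (dg hx (k + 2)).pos
    have h1' : Real.exp m / (dg hx (k + 1) : ℕ+) ≤ pq x (k + 2) := by
      rw [div_le_iff₀ pa, mul_comm]; exact h1
    have h2' : Real.exp m / (dg hx (k + 2) : ℕ+) ≤ pq x (k + 3) := by
      rw [div_le_iff₀ pb, mul_comm]; exact h2
    rcases le_total (Real.log (dg hx (k + 1) : ℕ+)) ((1 - s) * m) with hc | hc
    · left
      refine Set.mem_iUnion.2 ⟨dg hx (k + 1), hc, ⟨_, ?_, e0.symm⟩⟩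
      exact hx.gauss_iter_le (k + 1) (by positivity) h1'
    · right
      rcases le_total (Real.log (dg hx (k + 2) : ℕ+)) (s * m) with hd | hd
      · left
        refine Set.mem_iUnion₂.2 ⟨dg hx (k + 1), dg hx (k + 2), ⟨hc, hd⟩, ⟨_, ?_, e3.symm⟩⟩
        exact hx.gauss_iter_le (k + 2) (by positivity) h2'
      · right
        refine Set.mem_iUnion.2 ⟨dg hx (k + 1), hc, ⟨_, ?_, e0.symm⟩⟩
        refine hx.gauss_iter_le (k + 1) (by positivity) ?_
        exact (Real.le_log_iff_exp_le pb).1 hd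
  set E := ENNReal.ofReal (Real.exp ((-fe s + ε) * m)) with hE
  have b1 : ∀ u a, H (S1 u a) ≤ ENNReal.ofReal ((contQ (wd u) : ℝ) ^ (-(2 * s))) *
      (E * ENNReal.ofReal ((a : ℝ) ^ (-(1 + ε)))) := by
    intro u a
    apply hcont_cond
    intro hc
    refine (hcont_piece hs0 ((posW_wd u).append (posW_single a)) (exp_log_add_le (posW_wd u) a)
      (hexp a)).trans ?_
    rw [hE, q_rpow_eq, rpow_eq_exp_log, ← ENNReal.ofReal_mul (by positivity),
      ← ENNReal.ofReal_mul (by positivity), ← Real.exp_add, ← Real.exp_add]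
    apply ENNReal.ofReal_le_ofReal
    apply Real.exp_le_exp.2
    have hh := mul_le_mul_of_nonneg_left hc (by linarith : 0 ≤ 1 - s + ε)
    have : 0 ≤ ε * s * m := by positivity
    unfold fe
    nlinarith
  have b2 : ∀ u a b, H (S2 u a b) ≤ ENNReal.ofReal ((contQ (wd u) : ℝ) ^ (-(2 * s))) *
      (E * (ENNReal.ofReal ((a : ℝ) ^ (-(1 + ε))) * ENNReal.ofReal ((b : ℝ) ^ (-(1 + ε))))) := by
    intro u a b
    apply hcont_cond
    rintro ⟨hc, hd⟩
    have hw := (posW_wd u).append (posW_single a)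
    have hq : Real.log (contQ (wd u)) + Real.log a + Real.log b ≤
        Real.log (contQ (wd u ++ [(a : ℕ)] ++ [(b : ℕ)])) := by
      linarith [log_add_le (posW_wd u) a, log_add_le hw b]
    refine (hcont_piece hs0 (hw.append (posW_single b))
      (exp_log_q (hw.append (posW_single b)) hq) (hexp b)).trans ?_
    rw [hE, q_rpow_eq, rpow_eq_exp_log, rpow_eq_exp_log, ← ENNReal.ofReal_mul (by positivity),
      ← ENNReal.ofReal_mul (by positivity), ← ENNReal.ofReal_mul (by positivity),
      ← Real.exp_add, ← Real.exp_add, ← Real.exp_add]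
    apply ENNReal.ofReal_le_ofReal
    apply Real.exp_le_exp.2
    have hh := mul_le_mul_of_nonneg_left hd (by linarith : 0 ≤ 1 - s + ε)
    have hh2 := mul_le_mul_of_nonneg_left hc (by linarith : 0 ≤ 2 * s - 1 - ε)
    unfold fe
    nlinarith
  have b3 : ∀ u a, H (S3 u a) ≤ ENNReal.ofReal ((contQ (wd u) : ℝ) ^ (-(2 * s))) *
      (E * ENNReal.ofReal ((a : ℝ) ^ (-(1 + ε)))) := by
    intro u a
    apply hcont_cond
    intro hc
    refine (hcont_piece hs0 ((posW_wd u).append (posW_single a)) (exp_log_add_le (posW_wd u) a)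
      rfl).trans ?_
    rw [hE, q_rpow_eq, rpow_eq_exp_log, ← ENNReal.ofReal_mul (by positivity),
      ← ENNReal.ofReal_mul (by positivity), ← Real.exp_add, ← Real.exp_add]
    apply ENNReal.ofReal_le_ofReal
    apply Real.exp_le_exp.2
    have hh := mul_le_mul_of_nonneg_left hc (by linarith : 0 ≤ 2 * s - 1 - ε)
    have : 0 ≤ ε * s * m := by positivity
    unfold fe
    nlinarith
  calc H (AdjSet (Real.exp m) k)
      ≤ ∑' u : Fin k → ℕ+, ENNReal.ofReal ((contQ (wd u) : ℝ) ^ (-(2 * s))) *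
        (E * (zt (1 + ε) + (zt (1 + ε) * zt (1 + ε) + zt (1 + ε)))) := by
        refine (measure_mono hcover).trans ((measure_iUnion_le _).trans ?_)
        refine ENNReal.tsum_le_tsum fun u => ?_
        rw [mul_add, mul_add, mul_add, mul_add]
        refine (measure_union_le _ _).trans (add_le_add ?_ ((measure_union_le _ _).trans
          (add_le_add ?_ ?_)))
        · refine (measure_iUnion_le _).trans ((ENNReal.tsum_le_tsum (b1 u)).trans ?_)
          rw [ENNReal.tsum_mul_left, ENNReal.tsum_mul_left]; rfl
        · refine (measure_iUnion_le _).trans ?_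
          refine (ENNReal.tsum_le_tsum fun a => (measure_iUnion_le _).trans
            (ENNReal.tsum_le_tsum (b2 u a))).trans ?_
          simp_rw [ENNReal.tsum_mul_left, ENNReal.tsum_mul_right]; rfl
        · refine (measure_iUnion_le _).trans ((ENNReal.tsum_le_tsum (b3 u)).trans ?_)
          rw [ENNReal.tsum_mul_left, ENNReal.tsum_mul_left]; rfl
    _ = _ := by rw [ENNReal.tsum_mul_right]; rfl

/-- Content of `FarSet`. Two disjoint products cost at least as much as overlapping ones: the
first one is summed over both of its digits, the second is cut at the threshold `M^s`. -/
lemma hcont_far {s ε m : ℝ} (hs : 1 / 2 < s) (hs1 : s < 1) (hε : 0 < ε)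
    (hm : 0 ≤ m) (k j : ℕ) :
    hcont s (by linarith) (FarSet (Real.exp m) k j) ≤
      Zs s k * (Zs s j * (ENNReal.ofReal (Real.exp ((-fe s + ε) * m)) *
        (zt (1 + (2 * s - 1) * s) * zt (1 + (2 * s - 1) * s) * (zt (1 + ε) + 1)))) := by
  have hs0 : 0 < s := by linarith
  set H := hcont s hs0 with hH
  let S1 (u : Fin k → ℕ+) (v : Fin j → ℕ+) (a b c : ℕ+) : Set ℝ :=
    {x | (m ≤ Real.log a + Real.log b ∧ Real.log c ≤ s * m) ∧
    x ∈ cylMap (wd u ++ [(a : ℕ)] ++ [(b : ℕ)] ++ wd v ++ [(c : ℕ)]) ''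
      Set.Icc 0 (1 / (Real.exp m / c))}
  let S2 (u : Fin k → ℕ+) (v : Fin j → ℕ+) (a b : ℕ+) : Set ℝ :=
    {x | m ≤ Real.log a + Real.log b ∧
    x ∈ cylMap (wd u ++ [(a : ℕ)] ++ [(b : ℕ)] ++ wd v) ''
      Set.Icc 0 (1 / Real.exp (s * m))}
  have hexp : ∀ a : ℕ+, Real.exp m / a = Real.exp (m - Real.log a) := by
    intro a
    have h2 : (0 : ℝ) < a := by exact_mod_cast a.pos
    rw [Real.exp_sub, Real.exp_log h2]
  have hcover : FarSet (Real.exp m) k j ⊆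
      ⋃ u : Fin k → ℕ+, ⋃ v : Fin j → ℕ+, ⋃ a : ℕ+, ⋃ b : ℕ+,
        ((⋃ c, S1 u v a b c) ∪ S2 u v a b) := by
    rintro x ⟨hx, h1, h2⟩
    refine Set.mem_iUnion₂.2 ⟨dig hx 0 k, dig hx (k + 2) j,
      Set.mem_iUnion₂.2 ⟨dg hx (k + 1), dg hx (k + 2), ?_⟩⟩
    have e0 := hx.eq_cyl_dig 0 k
    rw [Nat.zero_add, Function.iterate_zero, id] at e0
    have e1 := hx.eq_cyl_dg k
    have e2 := hx.eq_cyl_dg (k + 1)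
    have e3 := hx.eq_cyl_dig (k + 2) j
    have e4 := hx.eq_cyl_dg (k + 2 + j)
    rw [e1, ← cylMap_append, e2, ← cylMap_append, e3, ← cylMap_append] at e0
    have e5 := e0
    rw [e4, ← cylMap_append] at e5
    have pa : (0 : ℝ) < (dg hx (k + 1) : ℕ+) := by exact_mod_cast (dg hx (k + 1)).pos
    have pb : (0 : ℝ) < (dg hx (k + 2) : ℕ+) := by exact_mod_cast (dg hx (k + 2)).pos
    have pc : (0 : ℝ) < (dg hx (k + 2 + j + 1) : ℕ+) := by
      exact_mod_cast (dg hx (k + 2 + j + 1)).pos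
    have h1' : m ≤ Real.log (dg hx (k + 1) : ℕ+) + Real.log (dg hx (k + 2) : ℕ+) := by
      rw [← Real.log_mul pa.ne' pb.ne', Real.le_log_iff_exp_le (by positivity)]; exact h1
    have h2' : Real.exp m / (dg hx (k + 2 + j + 1) : ℕ+) ≤ pq x (k + 2 + j + 2) := by
      rw [div_le_iff₀ pc, mul_comm]; exact h2
    rcases le_total (Real.log (dg hx (k + 2 + j + 1) : ℕ+)) (s * m) with hd | hd
    · left
      refine Set.mem_iUnion.2 ⟨dg hx (k + 2 + j + 1), ⟨h1', hd⟩, ⟨_, ?_, e5.symm⟩⟩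
      exact hx.gauss_iter_le (k + 2 + j + 1) (by positivity) h2'
    · right
      refine ⟨h1', ⟨_, ?_, e0.symm⟩⟩
      refine hx.gauss_iter_le (k + 2 + j) (by positivity) ?_
      exact (Real.le_log_iff_exp_le pc).1 hd
  set E := ENNReal.ofReal (Real.exp ((-fe s + ε) * m)) with hE
  have hlog : ∀ (u : Fin k → ℕ+) (v : Fin j → ℕ+) (a b : ℕ+),
      Real.log (contQ (wd u)) + Real.log a + Real.log b + Real.log (contQ (wd v)) ≤
        Real.log (contQ (wd u ++ [(a : ℕ)] ++ [(b : ℕ)] ++ wd v)) := by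
    intro u v a b
    have hw := (posW_wd u).append (posW_single a)
    linarith [log_add_le (posW_wd u) a, log_add_le hw b,
      log_append_le (hw.append (posW_single b)) (posW_wd v)]
  have hpos : ∀ (u : Fin k → ℕ+) (v : Fin j → ℕ+) (a b : ℕ+),
      PosW (wd u ++ [(a : ℕ)] ++ [(b : ℕ)] ++ wd v) := fun u v a b =>
    (((posW_wd u).append (posW_single a)).append (posW_single b)).append (posW_wd v)
  have b1 : ∀ u v a b c, H (S1 u v a b c) ≤
      ENNReal.ofReal ((contQ (wd u) : ℝ) ^ (-(2 * s))) *
      (ENNReal.ofReal ((contQ (wd v) : ℝ) ^ (-(2 * s))) * (E *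
        (ENNReal.ofReal ((a : ℝ) ^ (-(1 + (2 * s - 1) * s))) *
        ENNReal.ofReal ((b : ℝ) ^ (-(1 + (2 * s - 1) * s))) *
        ENNReal.ofReal ((c : ℝ) ^ (-(1 + ε)))))) := by
    intro u v a b c
    apply hcont_cond
    rintro ⟨hc, hd⟩
    have hq := (add_le_add_left (hlog u v a b) (Real.log c)).trans (log_add_le (hpos u v a b) c)
    refine (hcont_piece hs0 ((hpos u v a b).append (posW_single c))
      (exp_log_q ((hpos u v a b).append (posW_single c)) hq) (hexp c)).trans ?_
    rw [hE, q_rpow_eq, q_rpow_eq, rpow_eq_exp_log, rpow_eq_exp_log, rpow_eq_exp_log]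
    simp only [← ENNReal.ofReal_mul (Real.exp_pos _).le, ← Real.exp_add]
    apply ENNReal.ofReal_le_ofReal
    apply Real.exp_le_exp.2
    have hh := mul_le_mul_of_nonneg_left hd (by linarith : 0 ≤ 1 - s + ε)
    have hh2 := mul_le_mul_of_nonneg_left hc
      (mul_nonneg (by linarith) (by linarith) : 0 ≤ (2 * s - 1) * (1 - s))
    have : 0 ≤ ε * (1 - s) * m := mul_nonneg (mul_nonneg hε.le (by linarith)) hm
    unfold fe
    nlinarith
  have b2 : ∀ u v a b, H (S2 u v a b) ≤
      ENNReal.ofReal ((contQ (wd u) : ℝ) ^ (-(2 * s))) *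
      (ENNReal.ofReal ((contQ (wd v) : ℝ) ^ (-(2 * s))) * (E *
        (ENNReal.ofReal ((a : ℝ) ^ (-(1 + (2 * s - 1) * s))) *
        ENNReal.ofReal ((b : ℝ) ^ (-(1 + (2 * s - 1) * s)))))) := by
    intro u v a b
    apply hcont_cond
    intro hc
    refine (hcont_piece hs0 (hpos u v a b)
      (exp_log_q (hpos u v a b) (hlog u v a b)) rfl).trans ?_
    rw [hE, q_rpow_eq, q_rpow_eq, rpow_eq_exp_log, rpow_eq_exp_log]
    simp only [← ENNReal.ofReal_mul (Real.exp_pos _).le, ← Real.exp_add]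
    apply ENNReal.ofReal_le_ofReal
    apply Real.exp_le_exp.2
    have hh2 := mul_le_mul_of_nonneg_left hc
      (mul_nonneg (by linarith) (by linarith) : 0 ≤ (2 * s - 1) * (1 - s))
    have : 0 ≤ ε * m := by positivity
    unfold fe
    nlinarith
  calc H (FarSet (Real.exp m) k j)
      ≤ ∑' (u : Fin k → ℕ+) (v : Fin j → ℕ+) (a : ℕ+) (b : ℕ+),
        ENNReal.ofReal ((contQ (wd u) : ℝ) ^ (-(2 * s))) *
        (ENNReal.ofReal ((contQ (wd v) : ℝ) ^ (-(2 * s))) * (E *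
        (ENNReal.ofReal ((a : ℝ) ^ (-(1 + (2 * s - 1) * s))) *
        ENNReal.ofReal ((b : ℝ) ^ (-(1 + (2 * s - 1) * s))) * (zt (1 + ε) + 1)))) := by
        refine (measure_mono hcover).trans ?_
        refine (measure_iUnion_le _).trans (ENNReal.tsum_le_tsum fun u => ?_)
        refine (measure_iUnion_le _).trans (ENNReal.tsum_le_tsum fun v => ?_)
        refine (measure_iUnion_le _).trans (ENNReal.tsum_le_tsum fun a => ?_)
        refine (measure_iUnion_le _).trans (ENNReal.tsum_le_tsum fun b => ?_)
        refine (measure_union_le _ _).trans ?_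
        simp only [mul_add, mul_one]
        refine add_le_add ?_ (b2 u v a b)
        refine (measure_iUnion_le _).trans ((ENNReal.tsum_le_tsum (b1 u v a b)).trans ?_)
        simp_rw [ENNReal.tsum_mul_left]; rfl
    _ = _ := by
      simp_rw [ENNReal.tsum_mul_left, ENNReal.tsum_mul_right, ENNReal.tsum_mul_left,
        ENNReal.tsum_mul_right]
      rfl

/-! ### The upper bound -/

/-- A finite union of sets `AdjSet` and `FarSet` containing every point of `F2` caught at time `n`,
that is, with two products at least `M` at indices at most `n`. -/
def CatchSet (M : ℝ) (n : ℕ) : Set ℝ :=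
  ⋃ k ∈ Finset.range n, (AdjSet M k ∪ ⋃ j ∈ Finset.range (n - k), FarSet M k j)

lemma mem_catchSet {M : ℝ} {n k l : ℕ} {x : ℝ} (hx : IrrI x) (hk : 1 ≤ k) (hkl : k < l)
    (hl : l ≤ n) (h1 : M ≤ (pq x k : ℝ) * pq x (k + 1)) (h2 : M ≤ (pq x l : ℝ) * pq x (l + 1)) :
    x ∈ CatchSet M n := by
  obtain ⟨k, rfl⟩ := Nat.exists_eq_add_of_le hk
  rw [Nat.add_comm 1 k] at *
  refine Set.mem_iUnion₂.2 ⟨k, Finset.mem_range.2 (by omega), ?_⟩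
  rcases Nat.eq_or_lt_of_le (Nat.succ_le_of_lt hkl) with h | h
  · left
    subst h
    exact ⟨hx, h1, h2⟩
  · right
    obtain ⟨j, rfl⟩ := Nat.exists_eq_add_of_le (Nat.succ_le_of_lt h)
    refine Set.mem_iUnion₂.2 ⟨j, Finset.mem_range.2 (by omega), hx, h1, ?_⟩
    have e : (k + 1).succ.succ + j = k + 2 + j + 1 := by omega
    rw [e] at h2
    exact h2

lemma Zs_bound {s g : ℝ} (hs : 1 / 2 < s) (hg : 0 ≤ g)
    (h : ∀ᶠ n : ℕ in atTop, Zs s n ≤ ENNReal.ofReal (Real.exp (g * n))) :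
    ∃ D : ℝ≥0∞, D ≠ ⊤ ∧ ∀ n : ℕ, Zs s n ≤ D * ENNReal.ofReal (Real.exp (g * n)) := by
  obtain ⟨N, hN⟩ := eventually_atTop.1 h
  refine ⟨1 + ∑ i ∈ Finset.range N, Zs s i, ?_, fun n => ?_⟩
  · exact ENNReal.add_ne_top.2 ⟨ENNReal.one_ne_top,
      (ENNReal.sum_lt_top.2 fun i _ => (Zs_ne_top hs i).lt_top).ne⟩
  · rw [add_mul, one_mul]
    rcases le_or_gt N n with hn | hn
    · exact (hN n hn).trans le_self_add
    · refine le_trans ?_ le_add_self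
      have h1 : (1 : ℝ≥0∞) ≤ ENNReal.ofReal (Real.exp (g * n)) := by
        rw [← ENNReal.ofReal_one]
        exact ENNReal.ofReal_le_ofReal (Real.one_le_exp (by positivity))
      calc Zs s n ≤ ∑ i ∈ Finset.range N, Zs s i :=
            Finset.single_le_sum (f := fun i => Zs s i) (fun _ _ => zero_le)
              (Finset.mem_range.2 hn)
        _ = (∑ i ∈ Finset.range N, Zs s i) * 1 := (mul_one _).symm
        _ ≤ _ := by gcongr

lemma hcont_catch {s ε m g : ℝ} (hs : 1 / 2 < s) (hs1 : s < 1) (hε : 0 < ε) (hε2 : ε ≤ 2 * s - 1)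
    (hm : 0 ≤ m) (hg : 0 ≤ g) {D : ℝ≥0∞}
    (hD : ∀ n : ℕ, Zs s n ≤ D * ENNReal.ofReal (Real.exp (g * n))) (n : ℕ) :
    hcont s (by linarith) (CatchSet (Real.exp m) n) ≤
      (D * (zt (1 + ε) + (zt (1 + ε) * zt (1 + ε) + zt (1 + ε))) + D * D *
        (zt (1 + (2 * s - 1) * s) * zt (1 + (2 * s - 1) * s) * (zt (1 + ε) + 1))) *
      ENNReal.ofReal ((n : ℝ) ^ 2 * Real.exp (g * n + (-fe s + ε) * m)) := by
  set K1 := zt (1 + ε) + (zt (1 + ε) * zt (1 + ε) + zt (1 + ε))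
  set K2 := zt (1 + (2 * s - 1) * s) * zt (1 + (2 * s - 1) * s) * (zt (1 + ε) + 1)
  set e := ENNReal.ofReal (Real.exp ((-fe s + ε) * m)) with he
  set G := ENNReal.ofReal (Real.exp (g * n)) with hG
  have hexp : ∀ k : ℕ, k ≤ n → ENNReal.ofReal (Real.exp (g * k)) ≤ G := fun k hk =>
    ENNReal.ofReal_le_ofReal (Real.exp_le_exp.2 (by gcongr))
  have hsplit : ENNReal.ofReal ((n : ℝ) ^ 2 * Real.exp (g * n + (-fe s + ε) * m)) =
      (n : ℝ≥0∞) * (n * (G * e)) := by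
    rw [Real.exp_add, ENNReal.ofReal_mul (by positivity), ENNReal.ofReal_mul (by positivity),
      ENNReal.ofReal_pow (by positivity), ENNReal.ofReal_natCast, sq, mul_assoc]
  rw [hsplit]
  have hfar : ∀ k j : ℕ, k + j ≤ n →
      hcont s (by linarith) (FarSet (Real.exp m) k j) ≤ D * D * K2 * (G * e) := by
    intro k j hkj
    refine (hcont_far hs hs1 hε hm k j).trans ?_
    calc Zs s k * (Zs s j * (e * K2))
        ≤ (D * ENNReal.ofReal (Real.exp (g * k))) *
          ((D * ENNReal.ofReal (Real.exp (g * j))) * (e * K2)) := by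
          gcongr
          · exact hD k
          · exact hD j
      _ = D * D * K2 * (ENNReal.ofReal (Real.exp (g * (k + j : ℕ))) * e) := by
          have : g * ((k + j : ℕ) : ℝ) = g * k + g * j := by push_cast; ring
          rw [this, Real.exp_add, ENNReal.ofReal_mul (by positivity)]
          ring
      _ ≤ _ := by
          gcongr
          exact hexp _ hkj
  have hadj : ∀ k : ℕ, k ≤ n →
      hcont s (by linarith) (AdjSet (Real.exp m) k) ≤ D * K1 * (G * e) := by
    intro k hk
    refine (hcont_adj hs hs1 hε hε2 hm k).trans ?_
    calc Zs s k * (e * K1) ≤ (D * G) * (e * K1) := by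
          gcongr
          exact (hD k).trans (by gcongr; exact hexp k hk)
      _ = _ := by ring
  calc hcont s (by linarith) (CatchSet (Real.exp m) n)
      ≤ ∑ k ∈ Finset.range n, (n : ℝ≥0∞) * ((D * K1 + D * D * K2) * (G * e)) := by
        refine (measure_biUnion_finset_le _ _).trans (Finset.sum_le_sum fun k hk => ?_)
        rw [Finset.mem_range] at hk
        rw [add_mul, mul_add]
        refine (measure_union_le _ _).trans (add_le_add ?_ ?_)
        · refine (hadj k hk.le).trans ?_
          refine le_mul_of_one_le_left' ?_
          exact_mod_cast (by omega : 1 ≤ n)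
        · refine (measure_biUnion_finset_le _ _).trans ?_
          refine (Finset.sum_le_sum (g := fun _ => D * D * K2 * (G * e)) fun j hj => ?_).trans ?_
          · rw [Finset.mem_range] at hj
            exact hfar k j (by omega)
          · rw [Finset.sum_const, Finset.card_range, nsmul_eq_mul]
            gcongr
            exact_mod_cast Nat.sub_le _ _
    _ = _ := by
        rw [Finset.sum_const, Finset.card_range, nsmul_eq_mul]
        ring

/-- Upper bound: for `φ n ≥ M = exp m` with `m ≈ n log B`, the contents of the sets caught at
time `n` are summable, and Borel–Cantelli for the content applies. -/
lemma dimH_F2_le {φ : ℕ → ℝ} (hpos : ∀ n, 0 < φ n) {B : ℝ} (hB1 : 1 < B)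
    (hB : ((Real.log B : ℝ) : EReal) ≤
      Filter.atTop.liminf (fun n : ℕ => ((Real.log (φ n) / n : ℝ) : EReal)))
    {s₀ s : ℝ} (hs0 : 0 ≤ s₀) (hp : pressure B s₀ ≤ 0) (hss : s₀ < s) (hs1 : s < 1) :
    dimH (F2 φ) ≤ ENNReal.ofReal s := by
  have hs : 1 / 2 < s := (half_lt_of_pressure hB1 hs0 hp).trans hss
  have hsp : 0 < s := by linarith
  obtain ⟨δ₀, hδ₀, hdec⟩ := Zs_decay hB1 hp hss hs1.le
  set L := Real.log B with hL
  have hLpos : 0 < L := Real.log_pos hB1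
  have hfe0 : 0 < fe s := by unfold fe; nlinarith
  have hfe1 : fe s ≤ 1 := by unfold fe; nlinarith
  obtain ⟨δ, hδ, hδ1, hδ2⟩ : ∃ δ > 0, δ ≤ δ₀ ∧ δ ≤ fe s * L :=
    ⟨min δ₀ (fe s * L), lt_min hδ₀ (by positivity), min_le_left _ _, min_le_right _ _⟩
  have hg : 0 ≤ fe s * L - δ := by linarith
  obtain ⟨D, hDt, hD⟩ := Zs_bound hs hg (hdec.mono fun n hn => hn.trans
    (ENNReal.ofReal_le_ofReal (Real.exp_le_exp.2 (by gcongr))))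
  obtain ⟨η, hη, hη1, hη2⟩ : ∃ η > 0, η ≤ L / 2 ∧ η ≤ δ / 4 :=
    ⟨min (L / 2) (δ / 4), lt_min (by positivity) (by positivity), min_le_left _ _,
      min_le_right _ _⟩
  obtain ⟨ε, hε, hε1, hε2⟩ : ∃ ε > 0, ε ≤ 2 * s - 1 ∧ ε * L ≤ δ / 4 := by
    refine ⟨min (2 * s - 1) (δ / 4 / L), lt_min (by linarith) (by positivity), min_le_left _ _, ?_⟩
    calc _ ≤ δ / 4 / L * L := by gcongr; exact min_le_right _ _
      _ = _ := by field_simp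
  have hrate : ∀ n : ℕ, (fe s * L - δ) * n + (-fe s + ε) * ((L - η) * n) ≤ -(δ / 2) * n := by
    intro n
    have : (fe s * L - δ) + (-fe s + ε) * (L - η) ≤ -(δ / 2) := by nlinarith
    have h := mul_le_mul_of_nonneg_right this (Nat.cast_nonneg (α := ℝ) n)
    linarith
  have hev : ∀ᶠ n : ℕ in atTop, Real.exp ((L - η) * n) ≤ φ n := by
    have h1 : ((L - η : ℝ) : EReal) <
        Filter.atTop.liminf (fun n : ℕ => ((Real.log (φ n) / n : ℝ) : EReal)) :=
      lt_of_lt_of_le (by exact_mod_cast (by linarith : L - η < L)) hB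
    filter_upwards [eventually_lt_of_lt_liminf h1, eventually_ge_atTop 1] with n hn hn1
    have hn0 : (0 : ℝ) < n := by exact_mod_cast hn1
    have h2 : L - η < Real.log (φ n) / n := by exact_mod_cast hn
    rw [lt_div_iff₀ hn0] at h2
    exact (Real.le_log_iff_exp_le (hpos n)).1 h2.le
  set E : ℕ → Set ℝ := fun n => CatchSet (Real.exp ((L - η) * n)) n with hE
  have hsub : F2 φ ⊆ limsup E atTop := by
    rintro x ⟨hx, hirr, hinf⟩
    rw [mem_limsup_iff_frequently_mem]
    refine ((Nat.frequently_atTop_iff_infinite.2 hinf).and_eventually hev).mono ?_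
    rintro n ⟨⟨k, l, hk, hkn, hl, hln, hkl, h1, h2⟩, hn⟩
    have hx' : IrrI x := ⟨hx, hirr⟩
    rcases lt_or_gt_of_ne hkl with h | h
    · exact mem_catchSet hx' hk h hln (hn.trans h1) (hn.trans h2)
    · exact mem_catchSet hx' hl h hkn (hn.trans h2) (hn.trans h1)
  have hsum : ∑' n, hcont s hsp (E n) ≠ ⊤ := by
    have hz1 : zt (1 + ε) ≠ ⊤ := zeta_ne_top (by linarith)
    have hz2 : zt (1 + (2 * s - 1) * s) ≠ ⊤ := zeta_ne_top (by nlinarith)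
    refine ne_top_of_le_ne_top ?_ (ENNReal.tsum_le_tsum fun n => (hcont_catch hs hs1 hε hε1
      (mul_nonneg (by linarith) (Nat.cast_nonneg n)) hg hD n).trans
      (mul_le_mul_right (ENNReal.ofReal_le_ofReal (mul_le_mul_of_nonneg_left
        (Real.exp_le_exp.2 (hrate n)) (by positivity))) _))
    rw [ENNReal.tsum_mul_left]
    refine ENNReal.mul_ne_top (by finiteness) ?_
    exact (Real.summable_pow_mul_exp_neg_nat_mul 2 (by positivity : 0 < δ / 2)).tsum_ofReal_ne_top
  have h0 : hcont s hsp (F2 φ) = 0 := by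
    rw [← nonpos_iff_eq_zero]
    exact (measure_mono hsub).trans (measure_limsup_atTop_eq_zero hsum).le
  have h1 := hausdorff_zero_of_hcont hsp h0
  have := dimH_le_of_hausdorffMeasure_ne_top (d := s.toNNReal) (s := F2 φ) (by
    rw [Real.coe_toNNReal _ hsp.le, h1]; exact ENNReal.zero_ne_top)
  exact this

/-! ### Random continued fractions and the mass distribution principle -/

/-- Concatenation of the first `j` words of a sequence of words. -/
def preW (ω : ℕ → List ℕ) : ℕ → List ℕ
  | 0 => []
  | j + 1 => preW ω j ++ ω j

lemma preW_congr {ω ω' : ℕ → List ℕ} {j : ℕ} (h : ∀ i < j, ω i = ω' i) :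
    preW ω j = preW ω' j := by
  induction j with
  | zero => rfl
  | succ j ih => simp only [preW]; rw [ih fun i hi => h i (by omega), h j (by omega)]

/-- A random continued fraction: at level `j` a finite word is drawn from the alphabet `Lt j` with
probabilities `pr j`, independently of the other levels. The number `ρ j` controls the mass of an
initial segment `u` of `j` words by `ρ j * q(u)^(-2s)`, and `sep` says that a set of at least two words
used at level `j` has small mass compared with the spread of the tails it produces. -/
structure Moran (s : ℝ) where
  /-- alphabet of words at each level -/
  Lt : ℕ → Finset (List ℕ)
  /-- probability of each word -/
  pr : ℕ → List ℕ → ℝ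
  /-- mass ratio -/
  ρ : ℕ → ℝ
  /-- uniform constant -/
  C : ℝ
  pr_nonneg : ∀ j w, 0 ≤ pr j w
  pr_sum : ∀ j, ∑ w ∈ Lt j, pr j w = 1
  head : ∀ j, ∀ w ∈ Lt j, PosW w ∧ ∃ a w', 2 ≤ a ∧ w = a :: w'
  ρ_zero : 1 ≤ ρ 0
  ρ_le : ∀ j, ρ j ≤ C
  mass : ∀ j u w, PosW u → w ∈ Lt j →
    ρ j * (contQ u : ℝ) ^ (-(2 * s)) * pr j w ≤ ρ (j + 1) * (contQ (u ++ w) : ℝ) ^ (-(2 * s))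
  sep : ∀ j, ∀ T ⊆ Lt j, 2 ≤ T.card → ∃ r > 0, ρ j * ∑ w ∈ T, pr j w ≤ C * r ^ s ∧
    ∃ w ∈ T, ∃ w' ∈ T, ∀ u ∈ Set.Icc (0 : ℝ) (1 / 2), ∀ u' ∈ Set.Icc (0 : ℝ) (1 / 2),
      r ≤ |cylMap w u - cylMap w' u'|

/-- The points whose expansion is a concatenation of words from the alphabets. -/
def limSet (Lt : ℕ → Finset (List ℕ)) : Set ℝ :=
  {x | ∃ ω : ℕ → List ℕ, (∀ j, ω j ∈ Lt j) ∧
    ∀ j, ∃ u ∈ Set.Ioc (0 : ℝ) (1 / 2), x = cylMap (preW ω j) u}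

lemma cylMap_continuousOn {w : List ℕ} (hw : PosW w) : ContinuousOn (cylMap w) (Set.Icc 0 1) := by
  have : LipschitzOnWith 1 (cylMap w) (Set.Icc 0 1) := by
    apply LipschitzOnWith.of_dist_le_mul
    intro x hx y hy
    rw [Real.dist_eq, Real.dist_eq, NNReal.coe_one, one_mul]
    refine (cylMap_sub_le hw hx.1 hy.1).trans (div_le_self (abs_nonneg _) ?_)
    exact one_le_pow₀ (one_le_q hw)
  exact this.continuousOn

lemma two_le_q {w : List ℕ} (hw : PosW w) {a : ℕ} {w' : List ℕ} (ha : 2 ≤ a) (e : w = a :: w') :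
    2 ≤ contQ w := by
  have hw' : PosW w' := fun b hb => hw b (by rw [e]; exact List.mem_cons_of_mem _ hb)
  have h := contQ_append_ge [a] hw'
  rw [contQ_single, List.singleton_append, ← e] at h
  nlinarith [contQ_pos hw']

/-- A word with first digit at least `2` produces tails in `(0, 1/2]`. -/
lemma cylMap_head {w : List ℕ} {a : ℕ} {w' : List ℕ} (ha : 2 ≤ a)
    (e : w = a :: w') {t : ℝ} (ht : t ∈ Set.Icc (0 : ℝ) 1) :
    cylMap w t ∈ Set.Ioc (0 : ℝ) (1 / 2) := by
  have h0 : 0 ≤ cylMap w' t := cylMap_nonneg w' ht.1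
  have ha' : (2 : ℝ) ≤ a := by exact_mod_cast ha
  rw [e, cylMap_cons]
  refine ⟨by positivity, ?_⟩
  apply one_div_le_one_div_of_le (by norm_num)
  linarith

namespace Moran

variable {s : ℝ} (D : Moran s)

lemma posW_preW {ω : ℕ → List ℕ} (hω : ∀ j, ω j ∈ D.Lt j) (j : ℕ) : PosW (preW ω j) := by
  induction j with
  | zero => exact PosW.nil
  | succ j ih => exact ih.append (D.head j _ (hω j)).1

lemma q_preW {ω : ℕ → List ℕ} (hω : ∀ j, ω j ∈ D.Lt j) (j : ℕ) : 2 ^ j ≤ contQ (preW ω j) := by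
  induction j with
  | zero => simp [preW]
  | succ j ih =>
    obtain ⟨h1, a, w', h2, h3⟩ := D.head j _ (hω j)
    have := contQ_append_ge (preW ω j) h1
    have h4 := two_le_q h1 h2 h3
    calc 2 ^ (j + 1) = 2 ^ j * 2 := pow_succ _ _
      _ ≤ contQ (preW ω j) * contQ (ω j) := Nat.mul_le_mul ih h4
      _ ≤ _ := this

/-- Every admissible sequence of words codes a point of the limit set (nested compact sets). -/
lemma exists_point {ω : ℕ → List ℕ} (hω : ∀ j, ω j ∈ D.Lt j) :
    ∃ x, ∀ j, ∃ u ∈ Set.Ioc (0 : ℝ) (1 / 2), x = cylMap (preW ω j) u := by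
  let K : ℕ → Set ℝ := fun j => cylMap (preW ω j) '' Set.Icc 0 1
  have hc : ∀ j, IsCompact (K j) := fun j =>
    isCompact_Icc.image_of_continuousOn (cylMap_continuousOn (D.posW_preW hω j))
  have hne := IsCompact.nonempty_iInter_of_sequence_nonempty_isCompact_isClosed K
    (fun j => by
      rintro _ ⟨t, ht, rfl⟩
      refine ⟨cylMap (ω j) t, cylMap_mem_Icc (D.head j _ (hω j)).1 ht, ?_⟩
      rw [← cylMap_append]; rfl)
    (fun j => ⟨_, 0, by simp, rfl⟩) (hc 0) (fun j => (hc j).isClosed)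
  obtain ⟨x, hx⟩ := hne
  refine ⟨x, fun j => ?_⟩
  obtain ⟨t, ht, h⟩ := Set.mem_iInter.1 hx (j + 1)
  obtain ⟨h1, a, w', h2, h3⟩ := D.head j _ (hω j)
  refine ⟨cylMap (ω j) t, cylMap_head h2 h3 ht, ?_⟩
  rw [← h, ← cylMap_append]; rfl

lemma prod_le {ω : ℕ → List ℕ} (hω : ∀ j, ω j ∈ D.Lt j) (j : ℕ) :
    ∏ i ∈ Finset.range j, D.pr i (ω i) ≤ D.ρ j * (contQ (preW ω j) : ℝ) ^ (-(2 * s)) := by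
  induction j with
  | zero => simpa [preW] using D.ρ_zero
  | succ j ih =>
    rw [Finset.prod_range_succ]
    exact (mul_le_mul_of_nonneg_right ih (D.pr_nonneg _ _)).trans
      (D.mass j _ _ (D.posW_preW hω j) (hω j))

lemma C_pos : 0 < D.C := lt_of_lt_of_le one_pos (D.ρ_zero.trans (D.ρ_le 0))

instance instMeasurableSpaceList : MeasurableSpace (List ℕ) := ⊤
instance : DiscreteMeasurableSpace (List ℕ) := ⟨fun _ => trivial⟩

/-- The distribution of the word at level `j`. -/
noncomputable def pmf (j : ℕ) : PMF (D.Lt j) :=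
  PMF.ofFintype (fun w => ENNReal.ofReal (D.pr j w)) (by
    rw [← ENNReal.ofReal_sum_of_nonneg (fun w _ => D.pr_nonneg _ _),
      Finset.sum_coe_sort (D.Lt j) (fun w => D.pr j w), D.pr_sum, ENNReal.ofReal_one])

/-- The law of the sequence of words. -/
noncomputable def law : Measure (∀ j, D.Lt j) := Measure.infinitePi fun j => (D.pmf j).toMeasure

instance : IsProbabilityMeasure D.law := by unfold law; infer_instance

/-- Mass of the set of sequences with a given initial segment and with the next word in `T`. -/
lemma law_le (ω : ∀ j, D.Lt j) (j : ℕ) (T : Finset (List ℕ)) (V : Set (∀ j, D.Lt j))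
    (hV : ∀ ω' ∈ V, (∀ i < j, ω' i = ω i) ∧ (ω' j : List ℕ) ∈ T) :
    D.law V ≤ ENNReal.ofReal ((∏ i ∈ Finset.range j, D.pr i (ω i)) * ∑ w ∈ T, D.pr j w) := by
  classical
  let t : ∀ i, Set (D.Lt i) := fun i => if i < j then {ω i} else {w | (w : List ℕ) ∈ T}
  have hsub : V ⊆ Set.pi (Finset.range (j + 1) : Finset ℕ) t := by
    intro ω' h i hi
    obtain ⟨h1, h2⟩ := hV ω' h
    rw [Finset.mem_coe, Finset.mem_range] at hi
    by_cases hij : i < j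
    · simp [t, hij, h1 i hij]
    · obtain rfl : i = j := by omega
      simpa [t] using h2
  refine (measure_mono hsub).trans ?_
  rw [law, Measure.infinitePi_pi _ (fun i _ => MeasurableSet.of_discrete),
    Finset.prod_range_succ, ENNReal.ofReal_mul (Finset.prod_nonneg fun i _ => D.pr_nonneg _ _),
    ENNReal.ofReal_prod_of_nonneg (fun i _ => D.pr_nonneg _ _)]
  refine mul_le_mul' (Finset.prod_le_prod' fun i hi => ?_) ?_
  · rw [Finset.mem_range] at hi
    simp only [t, hi, if_true]
    rw [PMF.toMeasure_apply_singleton _ _ (MeasurableSet.of_discrete)]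
    rfl
  · simp only [t, lt_irrefl, if_false, pmf]
    rw [PMF.toMeasure_ofFintype_apply _ _ (MeasurableSet.of_discrete), tsum_fintype,
      ENNReal.ofReal_sum_of_nonneg (fun w _ => D.pr_nonneg _ _)]
    have h1 : ∀ w : D.Lt j, {w : D.Lt j | (w : List ℕ) ∈ T}.indicator
        (fun w : D.Lt j => ENNReal.ofReal (D.pr j w)) w =
        (fun w : List ℕ => if w ∈ T then ENNReal.ofReal (D.pr j w) else 0) w := by
      intro w; simp [Set.indicator_apply]
    rw [Finset.sum_congr rfl (fun w _ => h1 w), Finset.sum_coe_sort (D.Lt j)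
      (fun w : List ℕ => if w ∈ T then ENNReal.ofReal (D.pr j w) else 0), ← Finset.sum_filter]
    apply Finset.sum_le_sum_of_subset
    intro w hw
    exact (Finset.mem_filter.1 hw).2

/-- The point coded by a sequence of words. -/
noncomputable def point (ω : ∀ j, D.Lt j) : ℝ :=
  (D.exists_point (ω := fun j => ω j) fun j => (ω j).2).choose

lemma point_spec (ω : ∀ j, D.Lt j) (j : ℕ) :
    ∃ u ∈ Set.Ioc (0 : ℝ) (1 / 2), D.point ω = cylMap (preW (fun j => ω j) j) u :=
  (D.exists_point (ω := fun j => ω j) fun j => (ω j).2).choose_spec j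

/-- The mass estimate of the mass distribution principle. -/
lemma law_preimage_le (hs : 0 < s) (U : Set ℝ) :
    D.law (D.point ⁻¹' U) ≤ ENNReal.ofReal (D.C * 4 ^ s) * Metric.ediam U ^ s := by
  classical
  set V := D.point ⁻¹' U with hV
  by_cases hsub : V.Subsingleton
  · -- a single sequence has no mass, because initial segments have mass tending to zero
    rcases hsub.eq_empty_or_singleton with h | ⟨ω, h⟩
    · simp [h]
    · have hlim : Tendsto (fun j : ℕ => ENNReal.ofReal (D.C * ((2 : ℝ) ^ (-(2 * s))) ^ j))
          atTop (nhds 0) := by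
        have h2 : (2 : ℝ) ^ (-(2 * s)) < 1 :=
          Real.rpow_lt_one_of_one_lt_of_neg (by norm_num) (by linarith)
        have := (tendsto_pow_atTop_nhds_zero_of_lt_one (by positivity) h2).const_mul D.C
        rw [mul_zero] at this
        simpa using ENNReal.tendsto_ofReal this
      have h0 : D.law V ≤ 0 := by
        refine ge_of_tendsto' hlim fun j => ?_
        refine (D.law_le ω j (D.Lt j) V ?_).trans (ENNReal.ofReal_le_ofReal ?_)
        · rw [h]
          rintro ω' rfl
          exact ⟨fun _ _ => rfl, (ω' j).2⟩
        · rw [D.pr_sum, mul_one]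
          refine (D.prod_le (fun j => (ω j).2) j).trans ?_
          have hq : (2 : ℝ) ^ j ≤ contQ (preW (fun j => ω j) j) := by
            exact_mod_cast D.q_preW (ω := fun j => ω j) (fun j => (ω j).2) j
          have h3 : (contQ (preW (fun j => ω j) j) : ℝ) ^ (-(2 * s)) ≤
              ((2 : ℝ) ^ (-(2 * s))) ^ j := by
            have e : ((2 : ℝ) ^ (-(2 * s))) ^ j = ((2 : ℝ) ^ j) ^ (-(2 * s)) := by
              rw [← Real.rpow_natCast, ← Real.rpow_natCast, ← Real.rpow_mul (by norm_num),
                ← Real.rpow_mul (by norm_num), mul_comm (-(2 * s))]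
            rw [e]
            exact Real.rpow_le_rpow_of_nonpos (by positivity) hq (by linarith)
          exact mul_le_mul (D.ρ_le j) h3 (by positivity) D.C_pos.le
      exact h0.trans zero_le
  · -- `j` is the first level at which two sequences of `V` differ
    have hex : ∃ j, ∃ ω ∈ V, ∃ ω' ∈ V, ω j ≠ ω' j := by
      rw [Set.not_subsingleton_iff] at hsub
      obtain ⟨ω, h1, ω', h2, h3⟩ := hsub
      obtain ⟨j, hj⟩ := Function.ne_iff.1 h3
      exact ⟨j, ω, h1, ω', h2, hj⟩
    obtain ⟨ω, h1, ω', h2, hne⟩ := Nat.find_spec hex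
    set j := Nat.find hex with hj
    have hagree : ∀ ω₁ ∈ V, ∀ i < j, ω₁ i = ω i := by
      intro ω₁ h i hi
      by_contra hc
      exact Nat.find_min hex hi ⟨ω₁, h, ω, h1, hc⟩
    set T := (D.Lt j).filter fun w => ∃ ω₁ ∈ V, (ω₁ j : List ℕ) = w with hT
    have hTsub : T ⊆ D.Lt j := Finset.filter_subset _ _
    have hmem : ∀ ω₁ ∈ V, (ω₁ j : List ℕ) ∈ T := fun ω₁ h =>
      Finset.mem_filter.2 ⟨(ω₁ j).2, ω₁, h, rfl⟩
    have hcard : 2 ≤ T.card := by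
      have : 1 < T.card := Finset.one_lt_card.2
        ⟨ω j, hmem ω h1, ω' j, hmem ω' h2, fun h => hne (Subtype.ext h)⟩
      omega
    obtain ⟨r, hr, hrm, w, hw, w', hw', hdist⟩ := D.sep j T hTsub hcard
    have hlaw := D.law_le ω j T V fun ω₁ h => ⟨hagree ω₁ h, hmem ω₁ h⟩
    set q : ℝ := (contQ (preW (fun j => ω j) j) : ℝ) with hq
    have hpos := D.posW_preW (ω := fun j => ω j) (fun j => (ω j).2) j
    have hq1 : 1 ≤ q := one_le_q hpos
    have hq0 : 0 < q := by linarith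
    have hmass : (∏ i ∈ Finset.range j, D.pr i (ω i)) * ∑ w ∈ T, D.pr j w ≤
        D.C * 4 ^ s * (r / (4 * q ^ 2)) ^ s := by
      calc _ ≤ D.ρ j * q ^ (-(2 * s)) * ∑ w ∈ T, D.pr j w :=
            mul_le_mul_of_nonneg_right (D.prod_le (fun j => (ω j).2) j)
              (Finset.sum_nonneg fun i _ => D.pr_nonneg _ _)
        _ = (D.ρ j * ∑ w ∈ T, D.pr j w) * q ^ (-(2 * s)) := by ring
        _ ≤ (D.C * r ^ s) * q ^ (-(2 * s)) := by gcongr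
        _ = _ := by
            rw [Real.div_rpow hr.le (by positivity), Real.mul_rpow (by norm_num) (by positivity),
              ← Real.rpow_natCast, ← Real.rpow_mul hq0.le, Real.rpow_neg hq0.le]
            push_cast
            field_simp
    have hdiam : ENNReal.ofReal (r / (4 * q ^ 2)) ≤ Metric.ediam U := by
      have hkey : ∀ w ∈ T, ∃ x ∈ U, ∃ u ∈ Set.Icc (0 : ℝ) (1 / 2),
          x = cylMap (preW (fun j => ω j) j) (cylMap w u) := by
        intro w hw
        obtain ⟨hwl, ω₁, h3, h4⟩ := Finset.mem_filter.1 hw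
        obtain ⟨u, hu, hx⟩ := D.point_spec ω₁ (j + 1)
        refine ⟨D.point ω₁, h3, u, Set.Ioc_subset_Icc_self hu, ?_⟩
        rw [hx, ← cylMap_append]
        simp only [preW]
        rw [h4, preW_congr (ω := fun j => ω₁ j) (ω' := fun j => ω j)
          (fun i hi => by rw [hagree ω₁ h3 i hi])]
      obtain ⟨x, hx, u, hu, hxu⟩ := hkey w hw
      obtain ⟨x', hx', u', hu', hxu'⟩ := hkey w' hw'
      have hI : ∀ {u : ℝ}, u ∈ Set.Icc (0 : ℝ) (1 / 2) → u ∈ Set.Icc (0 : ℝ) 1 := fun h =>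
        ⟨h.1, by linarith [h.2]⟩
      refine le_trans ?_ (Metric.edist_le_ediam_of_mem hx hx')
      rw [edist_dist, Real.dist_eq]
      apply ENNReal.ofReal_le_ofReal
      rw [hxu, hxu']
      refine le_trans ?_ (le_cylMap_sub hpos
        (cylMap_mem_Icc (D.head j w (hTsub hw)).1 (hI hu))
        (cylMap_mem_Icc (D.head j w' (hTsub hw')).1 (hI hu')))
      gcongr
      exact hdist u hu u' hu'
    calc D.law V ≤ _ := hlaw
      _ ≤ ENNReal.ofReal (D.C * 4 ^ s * (r / (4 * q ^ 2)) ^ s) := ENNReal.ofReal_le_ofReal hmass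
      _ = ENNReal.ofReal (D.C * 4 ^ s) * ENNReal.ofReal (r / (4 * q ^ 2)) ^ s := by
          rw [ENNReal.ofReal_mul (mul_nonneg D.C_pos.le (by positivity)),
            ENNReal.ofReal_rpow_of_nonneg (by positivity) hs.le]
      _ ≤ _ := by gcongr

/-- Mass distribution principle. The coding map need not be measurable: the law is pushed forward
as an outer measure. -/
theorem le_dimH (hs : 0 < s) : ENNReal.ofReal s ≤ dimH (limSet D.Lt) := by
  set c := ENNReal.ofReal (D.C * 4 ^ s) with hc
  have hc0 : c ≠ 0 := by
    have : 0 < D.C * 4 ^ s := mul_pos D.C_pos (by positivity)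
    simpa [hc] using this
  have hct : c ≠ ⊤ := ENNReal.ofReal_ne_top
  let M : OuterMeasure ℝ := c⁻¹ • OuterMeasure.map D.point D.law.toOuterMeasure
  have hM : M ≤ (Measure.hausdorffMeasure s : Measure ℝ).toOuterMeasure := by
    unfold Measure.hausdorffMeasure
    rw [Measure.mkMetric_toOuterMeasure]
    refine OuterMeasure.le_mkMetric _ _ 1 one_pos fun U _ => ?_
    change c⁻¹ * D.law (D.point ⁻¹' U) ≤ _
    calc _ ≤ c⁻¹ * (c * Metric.ediam U ^ s) := by gcongr; exact D.law_preimage_le hs U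
      _ = _ := by rw [← mul_assoc, ENNReal.inv_mul_cancel hc0 hct, one_mul]
  have h1 : c⁻¹ * 1 ≤ (Measure.hausdorffMeasure s : Measure ℝ) (limSet D.Lt) := by
    refine le_trans ?_ (hM (limSet D.Lt))
    change c⁻¹ * 1 ≤ c⁻¹ * D.law (D.point ⁻¹' (limSet D.Lt))
    have : D.point ⁻¹' (limSet D.Lt) = Set.univ :=
      Set.eq_univ_of_forall fun ω => ⟨fun j => ω j, fun j => (ω j).2, D.point_spec ω⟩
    rw [this, measure_univ]
  have := le_dimH_of_hausdorffMeasure_ne_zero (d := s.toNNReal) (s := limSet D.Lt) (by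
    rw [Real.coe_toNNReal _ hs.le]
    intro h
    rw [h, mul_one] at h1
    exact hct (ENNReal.inv_eq_zero.1 (nonpos_iff_eq_zero.1 h1)))
  exact this

end Moran

/-! ### Block words and single digits -/

/-- The block word `2 v 2`; the outer letters `2` keep the tails in `[0, 1/2]` and make different
blocks have disjoint compact cylinders. -/
def blk {m : ℕ} (v : Fin m → ℕ+) : List ℕ := (2 :: wd v) ++ [2]

lemma posW_blk {m : ℕ} (v : Fin m → ℕ+) : PosW (blk v) :=
  (PosW.cons (by norm_num) (posW_wd v)).append (PosW.cons (by norm_num) PosW.nil)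

lemma length_blk {m : ℕ} (v : Fin m → ℕ+) : (blk v).length = m + 2 := by simp [blk, wd]

lemma q_blk_le {m : ℕ} (v : Fin m → ℕ+) : contQ (blk v) ≤ 16 * contQ (wd v) := by
  have p2 : PosW [2] := PosW.cons (by norm_num) PosW.nil
  have h1 := contQ_append_le p2 (posW_wd v)
  have h2 := contQ_append_le (p2.append (posW_wd v)) p2
  rw [contQ_single] at h1 h2
  unfold blk
  rw [← List.singleton_append]
  omega

/-- A block word is determined by any point of its cylinder with tail in `[0, 1/2]`. -/
lemma blk_inj {m : ℕ} {v v' : Fin m → ℕ+} {u u' : ℝ} (hu : u ∈ Set.Icc (0 : ℝ) (1 / 2))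
    (hu' : u' ∈ Set.Icc (0 : ℝ) (1 / 2)) (h : cylMap (blk v) u = cylMap (blk v') u') :
    blk v = blk v' := by
  have ht : ∀ {u : ℝ}, u ∈ Set.Icc (0 : ℝ) (1 / 2) → cylMap [2] u ∈ Set.Ioo (0 : ℝ) 1 := by
    intro u hu
    have := cylMap_head (w := [2]) le_rfl rfl (t := u) ⟨hu.1, by linarith [hu.2]⟩
    exact ⟨this.1, by linarith [this.2]⟩
  unfold blk at h ⊢
  rw [cylMap_append, cylMap_append (2 :: wd v')] at h
  congr 1
  have hp : ∀ v : Fin m → ℕ+, PosW (2 :: wd v) := fun v => PosW.cons (by norm_num) (posW_wd v)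
  apply List.ext_getElem
  · simp [wd]
  · intro k hk hk'
    rw [← pq_cylMap (hp v) (ht hu) hk, ← pq_cylMap (hp v') (ht hu') hk', h]

lemma blk_injective {m : ℕ} : Function.Injective (blk (m := m)) := by
  intro v v' h
  have h1 : wd v = wd v' := by
    have := List.append_cancel_right h
    exact List.tail_eq_of_cons_eq this
  have h2 := List.ofFn_injective h1
  funext i
  exact PNat.coe_injective (congrFun h2 i)

/-- Finitely many block cylinders are uniformly separated, by compactness. -/
lemma blk_gap {m : ℕ} (W : Finset (Fin m → ℕ+)) :
    ∃ c > 0, c ≤ 1 / 16 ∧ ∀ v ∈ W, ∀ v' ∈ W, v ≠ v' →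
      ∀ u ∈ Set.Icc (0 : ℝ) (1 / 2), ∀ u' ∈ Set.Icc (0 : ℝ) (1 / 2),
        c ≤ |cylMap (blk v) u - cylMap (blk v') u'| := by
  classical
  have hcomp : ∀ v : Fin m → ℕ+, IsCompact (cylMap (blk v) '' Set.Icc (0 : ℝ) (1 / 2)) :=
    fun v => isCompact_Icc.image_of_continuousOn ((cylMap_continuousOn (posW_blk v)).mono
      (Set.Icc_subset_Icc_right (by norm_num)))
  have hpair : ∀ v v' : Fin m → ℕ+, ∃ c > 0, v ≠ v' →
      ∀ u ∈ Set.Icc (0 : ℝ) (1 / 2), ∀ u' ∈ Set.Icc (0 : ℝ) (1 / 2),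
        c ≤ |cylMap (blk v) u - cylMap (blk v') u'| := by
    intro v v'
    by_cases hne : v = v'
    · exact ⟨1, one_pos, fun h => absurd hne h⟩
    have hdisj : Disjoint (cylMap (blk v) '' Set.Icc (0 : ℝ) (1 / 2))
        (cylMap (blk v') '' Set.Icc (0 : ℝ) (1 / 2)) := by
      rw [Set.disjoint_left]
      rintro _ ⟨u, hu, rfl⟩ ⟨u', hu', h⟩
      exact hne (blk_injective (blk_inj hu hu' h.symm))
    obtain ⟨r, hr, h⟩ := Metric.exists_pos_forall_lt_edist (hcomp v) (hcomp v').isClosed hdisj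
    refine ⟨r, by exact_mod_cast hr, fun _ u hu u' hu' => ?_⟩
    have h1 := h _ ⟨u, hu, rfl⟩ _ ⟨u', hu', rfl⟩
    rw [edist_dist, Real.dist_eq, ENNReal.lt_ofReal_iff_toReal_lt ENNReal.coe_ne_top] at h1
    simpa using h1.le
  choose c hc hc2 using hpair
  obtain ⟨c₀, h0, h1⟩ : ∃ c₀ > 0, ∀ v ∈ W, ∀ v' ∈ W, c₀ ≤ c v v' := by
    rcases (W ×ˢ W).eq_empty_or_nonempty with h | h
    · refine ⟨1, one_pos, fun v hv v' hv' => ?_⟩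
      have : (v, v') ∈ W ×ˢ W := Finset.mk_mem_product hv hv'
      rw [h] at this
      simp at this
    · obtain ⟨p, hp, hmin⟩ := Finset.exists_min_image _ (fun p => c p.1 p.2) h
      exact ⟨c p.1 p.2, hc _ _, fun v hv v' hv' => hmin (v, v') (Finset.mk_mem_product hv hv')⟩
  exact ⟨min c₀ (1 / 16), lt_min h0 (by norm_num), min_le_right _ _,
    fun v hv v' hv' hne u hu u' hu' =>
      (min_le_left _ _).trans ((h1 v hv v' hv').trans (hc2 v v' hne u hu u' hu'))⟩

lemma fe_pos {s : ℝ} (hs : 1 / 2 ≤ s) (hs1 : s ≤ 1) : 0 < fe s := by unfold fe; nlinarith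

lemma fe_le_one {s : ℝ} (hs1 : s ≤ 1) : fe s ≤ 1 := by unfold fe; nlinarith

/-- Positive pressure gives finitely many block words with large partition sum, with room to
replace `B` by a larger base `b`. -/
lemma exists_blocks {B s : ℝ} (hB : 1 < B) (hs : 1 / 2 ≤ s) (hs1 : s ≤ 1)
    (h : ¬ pressure B s ≤ 0) : ∃ b > B, ∃ m : ℕ, ∃ W : Finset (Fin m → ℕ+),
      4 * b ^ (fe s * ((m + 2 : ℕ) : ℝ)) ≤ ∑ v ∈ W, (contQ (blk v) : ℝ) ^ (-(2 * s)) := by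
  obtain ⟨η, hη, hf⟩ := pressure_gt_of h
  have hB0 : 0 < B := by linarith
  have hfe := fe_pos hs hs1
  have hfe1 := fe_le_one hs1
  have hlarge : ∀ᶠ m : ℕ in atTop,
      Real.log 2000 + 2 * Real.log B + η < (3 / 4 * η) * m :=
    (tendsto_natCast_atTop_atTop.const_mul_atTop (by positivity)).eventually_gt_atTop _
  obtain ⟨m, hm, hm2⟩ := (hf.and_eventually hlarge).exists
  have hlogB : 0 < Real.log B := Real.log_pos hB
  set b := B * Real.exp (η / 4) with hb
  have hbB : B < b := by
    have : 1 < Real.exp (η / 4) := Real.one_lt_exp_iff.2 (by positivity)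
    rw [hb]; nlinarith
  refine ⟨b, hbB, m, ?_⟩
  have hlogb : Real.log b = Real.log B + η / 4 := by
    rw [hb, Real.log_mul hB0.ne' (Real.exp_pos _).ne', Real.log_exp]
  have hb0 : 0 < b := by linarith
  have hZ : ENNReal.ofReal (1024 * b ^ (fe s * ((m + 2 : ℕ) : ℝ))) < Zs s m := by
    rw [presSum_eq hB0] at hm
    have h1 : ENNReal.ofReal (Real.exp (η * m) * B ^ (m * fe s)) ≤ Zs s m := by
      calc _ = ENNReal.ofReal (B ^ (m * fe s)) * ENNReal.ofReal (Real.exp (η * m)) := by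
            rw [← ENNReal.ofReal_mul (by positivity), mul_comm]
        _ ≤ ENNReal.ofReal (B ^ (m * fe s)) *
            (ENNReal.ofReal (B ^ (-(m : ℝ) * fe s)) * Zs s m) := by gcongr
        _ = Zs s m := by
            rw [← mul_assoc, ← ENNReal.ofReal_mul (by positivity), ← Real.rpow_add hB0]
            simp
    refine lt_of_lt_of_le ?_ h1
    rw [ENNReal.ofReal_lt_ofReal_iff (by positivity)]
    have h2000 : (1024 : ℝ) < Real.exp (Real.log 2000) := by
      rw [Real.exp_log (by norm_num)]; norm_num
    calc 1024 * b ^ (fe s * ((m + 2 : ℕ) : ℝ))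
        < Real.exp (Real.log 2000) * b ^ (fe s * ((m + 2 : ℕ) : ℝ)) := by gcongr
      _ = Real.exp (Real.log 2000 + (Real.log B + η / 4) * (fe s * (m + 2))) := by
          rw [Real.rpow_def_of_pos hb0, hlogb, ← Real.exp_add]; push_cast; rfl
      _ ≤ Real.exp (η * m + Real.log B * (m * fe s)) := by
          apply Real.exp_le_exp.2
          have e1 : Real.log B * fe s ≤ Real.log B := by nlinarith
          have e2 : η * (fe s * (m + 2)) ≤ η * (m + 2) := by
            gcongr
            nlinarith [(Nat.cast_nonneg m : (0 : ℝ) ≤ m)]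
          nlinarith
      _ = _ := by rw [Real.rpow_def_of_pos hB0, Real.exp_add]
  unfold Zs at hZ
  rw [ENNReal.tsum_eq_iSup_sum] at hZ
  obtain ⟨W, hW⟩ := lt_iSup_iff.1 hZ
  refine ⟨W, ?_⟩
  rw [← ENNReal.ofReal_sum_of_nonneg (fun _ _ => by positivity)] at hW
  have hW2 := (ENNReal.ofReal_lt_ofReal_iff'.1 hW).1
  have h3 : ∀ v ∈ W, 1 / 256 * (contQ (wd v) : ℝ) ^ (-(2 * s)) ≤
      (contQ (blk v) : ℝ) ^ (-(2 * s)) := by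
    intro v _
    have q1 := one_le_q (posW_wd v)
    have q2 := one_le_q (posW_blk v)
    have hq : (contQ (blk v) : ℝ) ≤ 16 * contQ (wd v) := by exact_mod_cast q_blk_le v
    calc 1 / 256 * (contQ (wd v) : ℝ) ^ (-(2 * s))
        ≤ (16 : ℝ) ^ (-(2 * s)) * (contQ (wd v) : ℝ) ^ (-(2 * s)) := by
          gcongr
          calc (1 / 256 : ℝ) = (16 : ℝ) ^ (-2 : ℝ) := by
                rw [Real.rpow_neg (by norm_num)]; norm_num
            _ ≤ _ := Real.rpow_le_rpow_of_exponent_le (by norm_num) (by linarith)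
      _ = (16 * (contQ (wd v) : ℝ)) ^ (-(2 * s)) := by
          rw [Real.mul_rpow (by norm_num) (by positivity)]
      _ ≤ _ := Real.rpow_le_rpow_of_nonpos (by linarith) hq (by linarith)
  have h4 := Finset.sum_le_sum h3
  rw [← Finset.mul_sum] at h4
  linarith

lemma single_injective : Function.Injective (fun a : ℕ => [a]) := fun _ _ h => by simpa using h

/-- The alphabets: block words at levels with `A j = 0`, single digits in `[A j, 2 A j)` at the
other levels. -/
def alph {m : ℕ} (W : Finset (Fin m → ℕ+)) (A : ℕ → ℕ) (j : ℕ) : Finset (List ℕ) :=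
  if A j = 0 then W.map ⟨blk, blk_injective⟩
  else (Finset.Ico (A j) (2 * A j)).map ⟨fun a => [a], single_injective⟩

lemma single_gap {A a a' : ℕ} (hA : 1 ≤ A) (ha' : a' < 2 * A) (h : a < a') {u u' : ℝ}
    (hu : u ∈ Set.Icc (0 : ℝ) (1 / 2)) (hu' : u' ∈ Set.Icc (0 : ℝ) (1 / 2)) (ha : 1 ≤ a) :
    ((a' : ℝ) - a) / (8 * (A : ℝ) ^ 2) ≤ |cylMap [a] u - cylMap [a'] u'| := by
  rw [cylMap_cons, cylMap_cons, cylMap_nil, cylMap_nil]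
  have h1 : (1 : ℝ) ≤ a := by exact_mod_cast ha
  have h2 : (a : ℝ) + 1 ≤ a' := by exact_mod_cast h
  have h3 : (a' : ℝ) + 1 ≤ 2 * A := by exact_mod_cast ha'
  have hA' : (1 : ℝ) ≤ A := by exact_mod_cast hA
  obtain ⟨hu0, hu1⟩ := hu
  obtain ⟨hv0, hv1⟩ := hu'
  have p1 : 0 < (a : ℝ) + u := by linarith
  have p2 : 0 < (a' : ℝ) + u' := by linarith
  have e : 1 / ((a : ℝ) + u) - 1 / (a' + u') = (a' + u' - (a + u)) / ((a + u) * (a' + u')) := by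
    field_simp
  rw [e]
  refine le_trans ?_ (le_abs_self _)
  rw [div_le_div_iff₀ (by positivity) (by positivity)]
  have hp : ((a : ℝ) + u) * (a' + u') ≤ 4 * (A : ℝ) ^ 2 := by nlinarith
  have hd : ((a' : ℝ) - a) ≤ 2 * (a' + u' - (a + u)) := by linarith
  calc ((a' : ℝ) - a) * ((a + u) * (a' + u')) ≤ (2 * (a' + u' - (a + u))) * (4 * (A : ℝ) ^ 2) := by
        gcongr
        linarith
    _ = _ := by ring

/-- A schedule `A` whose mass ratios stay bounded gives a random continued fraction: a block word
is drawn with probability proportional to `q^(-2s)`, a single digit uniformly. -/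
lemma exists_moran {s : ℝ} (hs : 1 / 2 ≤ s) (hs1 : s ≤ 1) {m : ℕ} {W : Finset (Fin m → ℕ+)} {κ : ℝ}
    (hκ : 0 < κ) (hW : 4 ≤ κ * ∑ v ∈ W, (contQ (blk v) : ℝ) ^ (-(2 * s)))
    {A : ℕ → ℕ} {ρ : ℕ → ℝ} {C : ℝ} (hρ0 : ρ 0 = 1)
    (hρ : ∀ j, ρ (j + 1) = ρ j * (if A j = 0 then κ else 4 * (A j : ℝ) ^ (2 * s - 1)))
    (hρC : ∀ j, ρ j ≤ C) (hA : ∀ j, A j ≠ 0 → 2 ≤ A j)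
    (hρA : ∀ j, A j ≠ 0 → ρ j * (A j : ℝ) ^ s ≤ C) : ∃ D : Moran s, D.Lt = alph W A := by
  classical
  obtain ⟨c, hc, hc16, hgap⟩ := blk_gap W
  set Z := ∑ v ∈ W, (contQ (blk v) : ℝ) ^ (-(2 * s)) with hZ
  have hZ0 : 0 < Z := by
    by_contra h
    push Not at h
    nlinarith
  have hρpos : ∀ j, 0 < ρ j := by
    intro j
    induction j with
    | zero => rw [hρ0]; exact one_pos
    | succ j ih =>
      rw [hρ]
      apply mul_pos ih
      split_ifs with h
      · exact hκ
      · have : (0 : ℝ) < A j := by exact_mod_cast Nat.pos_of_ne_zero h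
        positivity
  have hC1 : 1 ≤ C := hρ0 ▸ hρC 0
  have hcs : 1 ≤ c ^ (-s) := Real.one_le_rpow_of_pos_of_le_one_of_nonpos hc (by linarith)
    (by linarith)
  have hcc : c ^ (-s) * c ^ s = 1 := by rw [← Real.rpow_add hc]; simp
  refine ⟨{
    Lt := alph W A
    pr := fun j w => if A j = 0 then (contQ w : ℝ) ^ (-(2 * s)) / Z else 1 / (A j : ℝ)
    ρ := ρ
    C := C * c ^ (-s)
    pr_nonneg := ?_
    pr_sum := ?_
    head := ?_
    ρ_zero := hρ0.ge
    ρ_le := ?_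
    mass := ?_
    sep := ?_ }, rfl⟩
  · intro j w
    split_ifs <;> positivity
  · intro j
    by_cases h : A j = 0
    · simp only [alph, h, if_true, Finset.sum_map, Function.Embedding.coeFn_mk]
      rw [← Finset.sum_div, ← hZ, div_self hZ0.ne']
    · have : (A j : ℝ) ≠ 0 := by exact_mod_cast h
      simp only [alph, h, if_false, Finset.sum_const, Finset.card_map, Nat.card_Ico, nsmul_eq_mul]
      rw [show 2 * A j - A j = A j by omega]
      field_simp
  · intro j w hw
    by_cases h : A j = 0
    · simp only [alph, h, if_true, Finset.mem_map, Function.Embedding.coeFn_mk] at hw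
      obtain ⟨v, hv, rfl⟩ := hw
      exact ⟨posW_blk v, 2, _, le_rfl, rfl⟩
    · simp only [alph, h, if_false, Finset.mem_map, Function.Embedding.coeFn_mk,
        Finset.mem_Ico] at hw
      obtain ⟨a, ha, rfl⟩ := hw
      have := hA j h
      exact ⟨PosW.cons (by omega) PosW.nil, a, [], by omega, rfl⟩
  · intro j
    calc ρ j ≤ C * 1 := by rw [mul_one]; exact hρC j
      _ ≤ _ := by gcongr
  · intro j u w hu hw
    have q1 := one_le_q hu
    rw [hρ, mul_assoc, mul_assoc]
    refine mul_le_mul_of_nonneg_left ?_ (hρpos j).le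
    by_cases h : A j = 0
    · simp only [alph, h, if_true, Finset.mem_map, Function.Embedding.coeFn_mk] at hw
      obtain ⟨v, hv, rfl⟩ := hw
      simp only [h, if_true]
      have q2 := one_le_q (posW_blk v)
      have q3 := one_le_q (hu.append (posW_blk v))
      have hq : (contQ (u ++ blk v) : ℝ) ≤ 2 * (contQ u * contQ (blk v)) := by
        exact_mod_cast contQ_append_le hu (posW_blk v)
      have h2 : (1 / 4 : ℝ) ≤ 2 ^ (-(2 * s)) := by
        calc (1 / 4 : ℝ) = (2 : ℝ) ^ (-2 : ℝ) := by
              rw [Real.rpow_neg (by norm_num)]; norm_num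
          _ ≤ _ := Real.rpow_le_rpow_of_exponent_le (by norm_num) (by linarith)
      have h3 : 1 / 4 * ((contQ u : ℝ) ^ (-(2 * s)) * (contQ (blk v) : ℝ) ^ (-(2 * s))) ≤
          (contQ (u ++ blk v) : ℝ) ^ (-(2 * s)) := by
        calc _ ≤ (2 : ℝ) ^ (-(2 * s)) *
              ((contQ u : ℝ) ^ (-(2 * s)) * (contQ (blk v) : ℝ) ^ (-(2 * s))) := by gcongr
          _ = (2 * ((contQ u : ℝ) * contQ (blk v))) ^ (-(2 * s)) := by
              rw [Real.mul_rpow (by norm_num) (by positivity),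
                Real.mul_rpow (by positivity) (by positivity)]
          _ ≤ _ := Real.rpow_le_rpow_of_nonpos (by linarith) hq (by linarith)
      rw [← mul_div_assoc, div_le_iff₀ hZ0]
      nlinarith [Real.rpow_nonneg (by linarith : (0 : ℝ) ≤ contQ (u ++ blk v)) (-(2 * s)),
        mul_le_mul_of_nonneg_right hW (Real.rpow_nonneg
          (by linarith : (0 : ℝ) ≤ contQ (u ++ blk v)) (-(2 * s)))]
    · simp only [alph, h, if_false, Finset.mem_map, Function.Embedding.coeFn_mk,
        Finset.mem_Ico] at hw
      obtain ⟨a, ha, rfl⟩ := hw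
      simp only [h, if_false]
      have hA2 := hA j h
      have hA0 : (0 : ℝ) < A j := by exact_mod_cast (by omega : 0 < A j)
      have hpa : PosW [a] := PosW.cons (by omega) PosW.nil
      have q3 := one_le_q (hu.append hpa)
      have hq : (contQ (u ++ [a]) : ℝ) ≤ (2 * A j) * contQ u := by
        have : contQ (u ++ [a]) ≤ (2 * A j) * contQ u := by
          rw [contQ_concat]
          have := contQ'_le hu
          nlinarith
        exact_mod_cast this
      have h2 : (1 / 4 : ℝ) ≤ 2 ^ (-(2 * s)) := by
        calc (1 / 4 : ℝ) = (2 : ℝ) ^ (-2 : ℝ) := by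
              rw [Real.rpow_neg (by norm_num)]; norm_num
          _ ≤ _ := Real.rpow_le_rpow_of_exponent_le (by norm_num) (by linarith)
      have h3 : 1 / 4 * (A j : ℝ) ^ (-(2 * s)) * (contQ u : ℝ) ^ (-(2 * s)) ≤
          (contQ (u ++ [a]) : ℝ) ^ (-(2 * s)) := by
        calc _ ≤ (2 : ℝ) ^ (-(2 * s)) * (A j : ℝ) ^ (-(2 * s)) * (contQ u : ℝ) ^ (-(2 * s)) := by
              gcongr
          _ = ((2 * (A j : ℝ)) * contQ u) ^ (-(2 * s)) := by
              rw [Real.mul_rpow (by positivity) (by positivity),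
                Real.mul_rpow (by positivity) (by positivity)]
          _ ≤ _ := Real.rpow_le_rpow_of_nonpos (by linarith) hq (by linarith)
      have h4 : 4 * (A j : ℝ) ^ (2 * s - 1) * (1 / 4 * (A j : ℝ) ^ (-(2 * s))) =
          1 / (A j : ℝ) := by
        have : (A j : ℝ) ^ (2 * s - 1) * (A j : ℝ) ^ (-(2 * s)) = (A j : ℝ)⁻¹ := by
          rw [← Real.rpow_add hA0, ← Real.rpow_neg_one]; congr 1; ring
        rw [show 1 / (A j : ℝ) = (A j : ℝ)⁻¹ from one_div _, ← this]; ring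
      calc _ = 4 * (A j : ℝ) ^ (2 * s - 1) * (1 / 4 * (A j : ℝ) ^ (-(2 * s)) *
            (contQ u : ℝ) ^ (-(2 * s))) := by rw [← mul_assoc, h4, mul_comm]
        _ ≤ _ := by gcongr
  · intro j T hT hcard
    by_cases h : A j = 0
    · refine ⟨c, hc, ?_, ?_⟩
      · simp only [h, if_true]
        have h1 : ∑ w ∈ T, (contQ w : ℝ) ^ (-(2 * s)) / Z ≤ 1 := by
          refine (Finset.sum_le_sum_of_subset_of_nonneg hT fun _ _ _ => by positivity).trans ?_
          simp only [alph, h, if_true, Finset.sum_map, Function.Embedding.coeFn_mk]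
          rw [← Finset.sum_div, ← hZ, div_self hZ0.ne']
        rw [mul_assoc, hcc, mul_one]
        calc _ ≤ ρ j * 1 := mul_le_mul_of_nonneg_left h1 (hρpos j).le
          _ ≤ _ := by rw [mul_one]; exact hρC j
      · obtain ⟨w, hw, w', hw', hne⟩ := Finset.one_lt_card.1 (by omega : 1 < T.card)
        refine ⟨w, hw, w', hw', ?_⟩
        have h1 := hT hw
        have h2 := hT hw'
        simp only [alph, h, if_true, Finset.mem_map, Function.Embedding.coeFn_mk] at h1 h2
        obtain ⟨v, hv, rfl⟩ := h1
        obtain ⟨v', hv', rfl⟩ := h2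
        exact hgap v hv v' hv' fun e => hne (by rw [e])
    · have hA2 := hA j h
      have hA0 : (0 : ℝ) < A j := by exact_mod_cast (by omega : 0 < A j)
      set T' : Finset ℕ := (Finset.Ico (A j) (2 * A j)).filter fun a => [a] ∈ T with hT'
      have hTT : T = T'.map ⟨fun a => [a], single_injective⟩ := by
        ext w
        simp only [hT', Finset.mem_map, Finset.mem_filter, Function.Embedding.coeFn_mk]
        constructor
        · intro hw
          have h1 := hT hw
          simp only [alph, h, if_false, Finset.mem_map, Function.Embedding.coeFn_mk] at h1
          obtain ⟨a, ha, rfl⟩ := h1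
          exact ⟨a, ⟨ha, hw⟩, rfl⟩
        · rintro ⟨a, ⟨-, ha⟩, rfl⟩
          exact ha
      have hcardT : T.card = T'.card := by rw [hTT, Finset.card_map]
      have hne : T'.Nonempty := Finset.card_pos.1 (by omega)
      set a := T'.min' hne with ha
      set a' := T'.max' hne with ha'
      have hmem : ∀ x ∈ T', A j ≤ x ∧ x < 2 * A j ∧ [x] ∈ T := by
        intro x hx
        obtain ⟨h1, h2⟩ := Finset.mem_filter.1 hx
        rw [Finset.mem_Ico] at h1
        exact ⟨h1.1, h1.2, h2⟩
      have haT := hmem a (T'.min'_mem hne)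
      have haT' := hmem a' (T'.max'_mem hne)
      have hwidth : T'.card ≤ a' + 1 - a := by
        rw [← Nat.card_Icc]
        exact Finset.card_le_card fun x hx =>
          Finset.mem_Icc.2 ⟨T'.min'_le x hx, T'.le_max' x hx⟩
      have hTA : T'.card ≤ A j := by
        have := Finset.card_filter_le (Finset.Ico (A j) (2 * A j)) fun a => [a] ∈ T
        rw [Nat.card_Ico] at this
        omega
      obtain ⟨t, ht⟩ : ∃ t : ℝ, t = T'.card := ⟨_, rfl⟩
      have ht2 : 2 ≤ t := by rw [ht]; exact_mod_cast hcardT ▸ hcard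
      have htA : t ≤ A j := by rw [ht]; exact_mod_cast hTA
      have hdiff : t / 2 ≤ (a' : ℝ) - a := by
        have h1 : T'.card + a ≤ a' + 1 := by omega
        have h2 : t + a ≤ a' + 1 := by rw [ht]; exact_mod_cast h1
        linarith
      refine ⟨t / (16 * (A j : ℝ) ^ 2), by positivity, ?_, [a], haT.2.2, [a'], haT'.2.2, ?_⟩
      · simp only [h, if_false, Finset.sum_const, nsmul_eq_mul]
        rw [hcardT, ← ht]
        have h1 : t * (1 / (A j : ℝ)) ≤ (t / A j) ^ s := by
          rw [mul_one_div]
          exact Real.self_le_rpow_of_le_one (by positivity) ((div_le_one hA0).2 htA) hs1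
        have h2 : (16 : ℝ) ^ s ≤ c ^ (-s) := by
          rw [Real.rpow_neg hc.le, ← Real.inv_rpow hc.le]
          refine Real.rpow_le_rpow (by norm_num) ?_ (by linarith)
          rw [le_inv_comm₀ (by norm_num) hc]
          linarith
        calc ρ j * (t * (1 / (A j : ℝ))) ≤ ρ j * (t / A j) ^ s :=
              mul_le_mul_of_nonneg_left h1 (hρpos j).le
          _ = (ρ j * (A j : ℝ) ^ s) * ((16 : ℝ) ^ s * (t / (16 * (A j : ℝ) ^ 2)) ^ s) := by
              rw [mul_assoc, ← Real.mul_rpow (by norm_num) (by positivity),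
                ← Real.mul_rpow (by positivity) (by positivity)]
              congr 2
              field_simp
          _ ≤ C * (c ^ (-s) * (t / (16 * (A j : ℝ) ^ 2)) ^ s) := by
              gcongr
              exact hρA j h
          _ = _ := by ring
      · intro u hu u' hu'
        refine le_trans ?_ (single_gap (by omega) haT'.2.1 ?_ hu hu' (by omega))
        · calc t / (16 * (A j : ℝ) ^ 2) = (t / 2) / (8 * (A j : ℝ) ^ 2) := by ring
            _ ≤ _ := by gcongr
        · have : 2 ≤ T'.card := hcardT ▸ hcard
          omega

/-! ### The schedule of large digits and the lower bound -/

/-- The lower end `⌈M ^ x⌉ + 1` of a range of large digits. -/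
noncomputable def bigDig (M x : ℝ) : ℕ := ⌈M ^ x⌉₊ + 1

lemma le_bigDig (M x : ℝ) : M ^ x ≤ bigDig M x := by
  unfold bigDig
  push_cast
  linarith [Nat.le_ceil (M ^ x)]

lemma bigDig_le {M x : ℝ} (hM : 1 ≤ M) (hx : 0 ≤ x) : (bigDig M x : ℝ) ≤ 3 * M ^ x := by
  have h1 : 1 ≤ M ^ x := Real.one_le_rpow hM hx
  have := Nat.ceil_lt_add_one (by linarith : 0 ≤ M ^ x)
  unfold bigDig
  push_cast
  linarith

lemma two_le_bigDig {M x : ℝ} (hM : 1 ≤ M) : 2 ≤ bigDig M x := by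
  have h1 : 0 < M ^ x := Real.rpow_pos_of_pos (by linarith) _
  have := Nat.ceil_pos.2 h1
  unfold bigDig
  omega

/-- How the bound `c * M ^ y` on a mass ratio changes when a power of a large digit enters. -/
lemma mul_bigDig_le {M x y e c ρ : ℝ} (hM : 1 ≤ M) (hx : 0 ≤ x) (he : 0 ≤ e) (he1 : e ≤ 1)
    (hρ : ρ ≤ c * M ^ y) (hc : 0 ≤ c) :
    ρ * (bigDig M x : ℝ) ^ e ≤ 3 * c * M ^ (y + x * e) := by
  have hM0 : 0 < M := by linarith
  have h3 : (3 : ℝ) ^ e ≤ 3 := by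
    calc (3 : ℝ) ^ e ≤ 3 ^ (1 : ℝ) := Real.rpow_le_rpow_of_exponent_le (by norm_num) he1
      _ = 3 := Real.rpow_one 3
  calc ρ * (bigDig M x : ℝ) ^ e ≤ (c * M ^ y) * (3 * M ^ x) ^ e := by
        gcongr
        exact bigDig_le hM hx
    _ = (c * M ^ y) * (3 ^ e * M ^ (x * e)) := by
        rw [Real.mul_rpow (by norm_num) (by positivity), Real.rpow_mul hM0.le]
    _ ≤ (c * M ^ y) * (3 * M ^ (x * e)) := by gcongr
    _ = _ := by rw [Real.rpow_add hM0]; ring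

/-- State of the construction before a level: mass ratio `ρ`, number `d` of digits already chosen,
phase `ph` (`0`: free blocks, `1` and `2`: the second and third large digit are due), and the
index `n` of the last triggering time. -/
structure St where
  ρ : ℝ
  d : ℕ
  ph : ℕ
  n : ℕ

/-- Three large digits, with products at least `β ^ n`, may be inserted now: the time `n` satisfies
`G`, the positions fit below `n`, and the mass ratio is small enough to absorb their cost. -/
def Trig (β s : ℝ) (G : ℕ → Prop) (st : St) (n : ℕ) : Prop :=
  st.d + 2 ≤ n ∧ G n ∧ st.ρ ≤ (β ^ n) ^ (-fe s)

/-- One step of the construction with digit size `A` (`A = 0` for a free block). -/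
def Step (β b s : ℝ) (h : ℕ) (G : ℕ → Prop) (st st' : St) (A : ℕ) : Prop :=
  (st.ph = 0 ∧ (¬ ∃ n, Trig β s G st n) ∧ A = 0 ∧
    st' = ⟨st.ρ * b ^ (-(fe s * (h : ℝ))), st.d + h, 0, st.n⟩) ∨
  (st.ph = 0 ∧ ∃ n, Trig β s G st n ∧ A = bigDig (β ^ n) (1 - s) ∧
    st' = ⟨st.ρ * (4 * (A : ℝ) ^ (2 * s - 1)), st.d + 1, 1, n⟩) ∨
  (st.ph = 1 ∧ A = bigDig (β ^ st.n) s ∧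
    st' = ⟨st.ρ * (4 * (A : ℝ) ^ (2 * s - 1)), st.d + 1, 2, st.n⟩) ∨
  (st.ph = 2 ∧ A = bigDig (β ^ st.n) (1 - s) ∧
    st' = ⟨st.ρ * (4 * (A : ℝ) ^ (2 * s - 1)), st.d + 1, 0, st.n⟩)

/-- Phase-dependent bound on the mass ratio. The exponents are those of
`M^(-fe s)` times `A^(2s-1)` for the digits `A` of size `M^(1-s)` and `M^s` inserted so far, where
`M = β ^ n`. -/
def MassInv (β s : ℝ) (st : St) : Prop :=
  0 < st.ρ ∧ ((st.ph = 0 ∧ st.ρ ≤ 1728) ∨ (st.ph = 1 ∧ st.ρ ≤ 12 * (β ^ st.n) ^ (-s ^ 2)) ∨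
    (st.ph = 2 ∧ st.ρ ≤ 144 * (β ^ st.n) ^ (s ^ 2 - s)))

lemma MassInv.exists_step {β s : ℝ} {st : St} (hI : MassInv β s st) (b : ℝ) (h : ℕ) (G : ℕ → Prop) :
    ∃ st' A, Step β b s h G st st' A := by
  rcases hI.2 with ⟨h1, -⟩ | ⟨h1, -⟩ | ⟨h1, -⟩
  · by_cases hT : ∃ n, Trig β s G st n
    · obtain ⟨n, hn⟩ := hT
      exact ⟨_, _, Or.inr (Or.inl ⟨h1, n, hn, rfl, rfl⟩)⟩
    · exact ⟨_, _, Or.inl ⟨h1, hT, rfl, rfl⟩⟩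
  · exact ⟨_, _, Or.inr (Or.inr (Or.inl ⟨h1, rfl, rfl⟩))⟩
  · exact ⟨_, _, Or.inr (Or.inr (Or.inr ⟨h1, rfl, rfl⟩))⟩

lemma MassInv.le {β s : ℝ} (hβ : 1 < β) (hs : 1 / 2 ≤ s) (hs1 : s ≤ 1) {st : St} (hI : MassInv β s st) :
    st.ρ ≤ 1728 := by
  have hM : (1 : ℝ) ≤ β ^ st.n := one_le_pow₀ hβ.le
  rcases hI.2 with ⟨-, h1⟩ | ⟨-, h1⟩ | ⟨-, h1⟩
  · exact h1
  · have := Real.rpow_le_one_of_one_le_of_nonpos hM (by nlinarith : -s ^ 2 ≤ 0)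
    linarith
  · have := Real.rpow_le_one_of_one_le_of_nonpos hM (by nlinarith : s ^ 2 - s ≤ 0)
    linarith

lemma Step.facts {β b s : ℝ} (hβ : 1 < β) (hb : β < b) (hs : 1 / 2 ≤ s) (hs1 : s ≤ 1) {h : ℕ}
    {G : ℕ → Prop} {st st' : St} {A : ℕ} (hI : MassInv β s st) (hS : Step β b s h G st st' A) :
    MassInv β s st' ∧
    st'.ρ = st.ρ * (if A = 0 then b ^ (-(fe s * (h : ℝ))) else 4 * (A : ℝ) ^ (2 * s - 1)) ∧
    st'.d = st.d + (if A = 0 then h else 1) ∧ (A ≠ 0 → 2 ≤ A) ∧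
    (A ≠ 0 → st.ρ * (A : ℝ) ^ s ≤ 1728) := by
  have hρ := hI.1
  have hM : ∀ n : ℕ, (1 : ℝ) ≤ β ^ n := fun n => one_le_pow₀ hβ.le
  have hne : ∀ (n : ℕ) (x : ℝ), bigDig (β ^ n) x ≠ 0 := fun n x => by
    have := two_le_bigDig (x := x) (hM n)
    omega
  have hpos : ∀ (n : ℕ) (x : ℝ), 0 < st.ρ * (4 * (bigDig (β ^ n) x : ℝ) ^ (2 * s - 1)) := by
    intro n x
    have : (0 : ℝ) < bigDig (β ^ n) x := by exact_mod_cast Nat.pos_of_ne_zero (hne n x)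
    positivity
  have hcomm : ∀ r a : ℝ, r * (4 * a) = 4 * (r * a) := fun r a => by ring
  rcases hS with ⟨hp, -, rfl, rfl⟩ | ⟨hp, n, hn, rfl, rfl⟩ | ⟨hp, rfl, rfl⟩ | ⟨hp, rfl, rfl⟩
  · refine ⟨⟨by have : 0 < b := by linarith
                positivity, Or.inl ⟨rfl, ?_⟩⟩, by simp, by simp, by simp, by simp⟩
    have h1 : b ^ (-(fe s * (h : ℝ))) ≤ 1 := by
      apply Real.rpow_le_one_of_one_le_of_nonpos (by linarith)
      have := fe_pos hs hs1
      rw [neg_nonpos]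
      positivity
    have h2 := hI.le hβ hs hs1
    simp only
    nlinarith
  · have hle : st.ρ ≤ 1 * (β ^ n) ^ (-fe s) := by rw [one_mul]; exact hn.2.2
    refine ⟨⟨hpos _ _, Or.inr (Or.inl ⟨rfl, ?_⟩)⟩, by simp [hne], by simp [hne],
      fun _ => two_le_bigDig (hM n), fun _ => ?_⟩
    · have := mul_bigDig_le (hM n) (by linarith : 0 ≤ 1 - s) (by linarith : 0 ≤ 2 * s - 1)
        (by linarith) hle (by norm_num)
      rw [show -fe s + (1 - s) * (2 * s - 1) = -s ^ 2 by unfold fe; ring] at this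
      simp only [hcomm]
      linarith
    · have := mul_bigDig_le (hM n) (by linarith : 0 ≤ 1 - s) (by linarith : 0 ≤ s)
        (by linarith) hle (by norm_num)
      have h2 := Real.rpow_le_one_of_one_le_of_nonpos (hM n)
        (by unfold fe; nlinarith : -fe s + (1 - s) * s ≤ 0)
      linarith
  · have hle : st.ρ ≤ 12 * (β ^ st.n) ^ (-s ^ 2) := by
      rcases hI.2 with ⟨h1, -⟩ | ⟨-, h1⟩ | ⟨h1, -⟩
      · omega
      · exact h1
      · omega
    refine ⟨⟨hpos _ _, Or.inr (Or.inr ⟨rfl, ?_⟩)⟩, by simp [hne], by simp [hne],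
      fun _ => two_le_bigDig (hM _), fun _ => ?_⟩
    · have := mul_bigDig_le (hM st.n) (by linarith : 0 ≤ s) (by linarith : 0 ≤ 2 * s - 1)
        (by linarith) hle (by norm_num)
      rw [show -s ^ 2 + s * (2 * s - 1) = s ^ 2 - s by ring] at this
      simp only [hcomm]
      linarith
    · have := mul_bigDig_le (hM st.n) (by linarith : 0 ≤ s) (by linarith : 0 ≤ s)
        (by linarith) hle (by norm_num)
      rw [show -s ^ 2 + s * s = 0 by ring, Real.rpow_zero] at this
      linarith
  · have hle : st.ρ ≤ 144 * (β ^ st.n) ^ (s ^ 2 - s) := by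
      rcases hI.2 with ⟨h1, -⟩ | ⟨h1, -⟩ | ⟨-, h1⟩
      · omega
      · omega
      · exact h1
    refine ⟨⟨hpos _ _, Or.inl ⟨rfl, ?_⟩⟩, by simp [hne], by simp [hne],
      fun _ => two_le_bigDig (hM _), fun _ => ?_⟩
    · have := mul_bigDig_le (hM st.n) (by linarith : 0 ≤ 1 - s) (by linarith : 0 ≤ 2 * s - 1)
        (by linarith) hle (by norm_num)
      have h2 := Real.rpow_le_one_of_one_le_of_nonpos (hM st.n)
        (by nlinarith [sq_nonneg (1 - s)] : s ^ 2 - s + (1 - s) * (2 * s - 1) ≤ 0)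
      simp only [hcomm]
      linarith
    · have := mul_bigDig_le (hM st.n) (by linarith : 0 ≤ 1 - s) (by linarith : 0 ≤ s)
        (by linarith) hle (by norm_num)
      rw [show s ^ 2 - s + (1 - s) * s = 0 by ring, Real.rpow_zero] at this
      linarith

lemma exists_seq {β b s : ℝ} (hβ : 1 < β) (hb : β < b) (hs : 1 / 2 ≤ s) (hs1 : s ≤ 1) (h : ℕ)
    (G : ℕ → Prop) : ∃ (S : ℕ → St) (A : ℕ → ℕ), S 0 = ⟨1, 0, 0, 0⟩ ∧
      (∀ j, MassInv β s (S j)) ∧ ∀ j, Step β b s h G (S j) (S (j + 1)) (A j) := by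
  have key : ∀ st : {st : St // MassInv β s st}, ∃ (st' : {st : St // MassInv β s st}) (A : ℕ),
      Step β b s h G st st' A := by
    rintro ⟨st, hI⟩
    obtain ⟨st', A, hS⟩ := hI.exists_step b h G
    exact ⟨⟨st', (hS.facts hβ hb hs hs1 hI).1⟩, A, hS⟩
  choose nx A hA using key
  let S : ℕ → {st : St // MassInv β s st} := fun j =>
    nx^[j] ⟨⟨1, 0, 0, 0⟩, one_pos, Or.inl ⟨rfl, by norm_num⟩⟩
  refine ⟨fun j => S j, fun j => A (S j), rfl, fun j => (S j).2, fun j => ?_⟩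
  have : S (j + 1) = nx (S j) := Function.iterate_succ_apply' _ _ _
  simp only [this]
  exact hA _

/-- Starting in phase `0`, a trigger eventually occurs,
since along free blocks `ρ` decays like `b ^ (-fe s * d)` with `b > β`. -/
lemma exists_trig {β b s : ℝ} (hβ : 1 < β) (hb : β < b) (hs : 1 / 2 ≤ s) (hs1 : s ≤ 1) {h : ℕ}
    (hh : 0 < h) {G : ℕ → Prop} (hG : ∃ᶠ n in atTop, G n) {S : ℕ → St} {A : ℕ → ℕ}
    (hI : ∀ j, MassInv β s (S j)) (hS : ∀ j, Step β b s h G (S j) (S (j + 1)) (A j)) (J : ℕ)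
    (hJ : (S J).ph = 0) : ∃ j ≥ J, (S j).ph = 0 ∧ ∃ n, Trig β s G (S j) n := by
  by_contra hcon
  push Not at hcon
  have hfe := fe_pos hs hs1
  have hb0 : 0 < b := by linarith
  have hβ0 : 0 < β := by linarith
  have hrun : ∀ i : ℕ, (S (J + i)).ph = 0 ∧ (S (J + i)).d = (S J).d + i * h ∧
      (S (J + i)).ρ = (S J).ρ * b ^ (-(fe s * ((i * h : ℕ) : ℝ))) := by
    intro i
    induction i with
    | zero => simp [hJ]
    | succ i ih =>
      obtain ⟨h1, h2, h3⟩ := ih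
      rcases hS (J + i) with ⟨-, -, -, e⟩ | ⟨hp, n, hn, -⟩ | ⟨hp, -⟩ | ⟨hp, -⟩
      · rw [← add_assoc, e]
        refine ⟨rfl, by simp only [h2]; ring, ?_⟩
        simp only [h3]
        rw [mul_assoc, ← Real.rpow_add hb0]
        congr 2
        push_cast
        ring
      · exact absurd hn (hcon _ (Nat.le_add_right _ _) hp n)
      · omega
      · omega
  -- the ratio `(β / b) ^ fe s` beats the constants accumulated up to level `J`
  obtain ⟨K, hK⟩ : ∃ K : ℝ, K = (S J).ρ * b ^ (fe s * ((2 + (S J).d + h : ℕ) : ℝ)) := ⟨_, rfl⟩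
  have hr : (β / b) ^ fe s < 1 :=
    Real.rpow_lt_one (by positivity) ((div_lt_one hb0).2 hb) hfe
  have hlim : Tendsto (fun n : ℕ => K * ((β / b) ^ fe s) ^ n) atTop (nhds (K * 0)) :=
    (tendsto_pow_atTop_nhds_zero_of_lt_one (by positivity) hr).const_mul K
  rw [mul_zero] at hlim
  have hev : ∀ᶠ n : ℕ in atTop, K * ((β / b) ^ fe s) ^ n < 1 :=
    hlim.eventually_lt_const one_pos
  obtain ⟨n, hn, hn1, hn2⟩ :=
    (hG.and_eventually (hev.and (eventually_ge_atTop (2 + (S J).d)))).exists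
  set i := (n - 2 - (S J).d) / h with hi
  have hi1 : i * h ≤ n - 2 - (S J).d := Nat.div_mul_le_self _ _
  have hi2 : n - 2 - (S J).d < i * h + h := by
    have := Nat.lt_div_mul_add (a := n - 2 - (S J).d) hh
    rw [← hi] at this
    omega
  obtain ⟨h1, h2, h3⟩ := hrun i
  refine hcon (J + i) (Nat.le_add_right _ _) h1 n ⟨by omega, hn, ?_⟩
  have hρ := (hI J).1
  have e1 : ((β / b) ^ fe s) ^ n = (β ^ n) ^ fe s * b ^ (-(fe s * n)) := by
    rw [← Real.rpow_natCast, ← Real.rpow_mul (by positivity), Real.div_rpow hβ0.le hb0.le,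
      Real.rpow_neg hb0.le, ← Real.rpow_natCast, ← Real.rpow_mul hβ0.le, mul_comm (fe s),
      div_eq_mul_inv]
  have e2 : (S (J + i)).ρ * (β ^ n) ^ fe s ≤ 1 := by
    refine le_trans ?_ hn1.le
    rw [h3, e1, hK]
    have : b ^ (-(fe s * ((i * h : ℕ) : ℝ))) ≤
        b ^ (fe s * ((2 + (S J).d + h : ℕ) : ℝ)) * b ^ (-(fe s * n)) := by
      rw [← Real.rpow_add hb0]
      apply Real.rpow_le_rpow_of_exponent_le (by linarith)
      have : (n : ℝ) ≤ ((2 + (S J).d + h : ℕ) : ℝ) + ((i * h : ℕ) : ℝ) := by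
        exact_mod_cast (by omega : n ≤ 2 + (S J).d + h + i * h)
      nlinarith
    calc _ ≤ (S J).ρ * (b ^ (fe s * ((2 + (S J).d + h : ℕ) : ℝ)) * b ^ (-(fe s * n))) *
          (β ^ n) ^ fe s := by gcongr
      _ = _ := by ring
  rw [Real.rpow_neg (by positivity), ← one_div, le_div_iff₀ (by positivity)]
  exact e2

/-- The schedule of digit sizes `A`: the mass ratios stay bounded, and infinitely often three
consecutive digits of sizes `M^(1-s)`, `M^s`, `M^(1-s)` are inserted, with `M = β ^ n` and `G n`. -/
lemma exists_schedule {β b s : ℝ} (hβ : 1 < β) (hb : β < b) (hs : 1 / 2 ≤ s) (hs1 : s ≤ 1) {h : ℕ}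
    (hh : 0 < h) {G : ℕ → Prop} (hG : ∃ᶠ n in atTop, G n) :
    ∃ (A : ℕ → ℕ) (ρ : ℕ → ℝ) (d : ℕ → ℕ), ρ 0 = 1 ∧ d 0 = 0 ∧
      (∀ j, ρ (j + 1) = ρ j *
        (if A j = 0 then b ^ (-(fe s * (h : ℝ))) else 4 * (A j : ℝ) ^ (2 * s - 1))) ∧
      (∀ j, d (j + 1) = d j + (if A j = 0 then h else 1)) ∧
      (∀ j, ρ j ≤ 1728) ∧ (∀ j, A j ≠ 0 → 2 ≤ A j) ∧
      (∀ j, A j ≠ 0 → ρ j * (A j : ℝ) ^ s ≤ 1728) ∧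
      ∀ J, ∃ j ≥ J, ∃ n, d j + 2 ≤ n ∧ G n ∧ A j = bigDig (β ^ n) (1 - s) ∧
        A (j + 1) = bigDig (β ^ n) s ∧ A (j + 2) = bigDig (β ^ n) (1 - s) := by
  obtain ⟨S, A, h0, hI, hS⟩ := exists_seq hβ hb hs hs1 h G
  have hF := fun j => (hS j).facts hβ hb hs hs1 (hI j)
  refine ⟨A, fun j => (S j).ρ, fun j => (S j).d, by simp [h0], by simp [h0],
    fun j => (hF j).2.1, fun j => (hF j).2.2.1, fun j => (hI j).le hβ hs hs1,
    fun j => (hF j).2.2.2.1, fun j => (hF j).2.2.2.2, fun J => ?_⟩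
  -- a phase-0 level occurs among any three consecutive ones
  obtain ⟨J', hJ', hph⟩ : ∃ J' ≥ J, (S J').ph = 0 := by
    have step1 : ∀ j, (S j).ph = 2 → (S (j + 1)).ph = 0 := by
      intro j hj
      rcases hS j with ⟨hp, -⟩ | ⟨hp, -⟩ | ⟨hp, -⟩ | ⟨-, -, e⟩
      · omega
      · omega
      · omega
      · rw [e]
    have step2 : ∀ j, (S j).ph = 1 → (S (j + 1)).ph = 2 := by
      intro j hj
      rcases hS j with ⟨hp, -⟩ | ⟨hp, -⟩ | ⟨-, -, e⟩ | ⟨hp, -⟩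
      · omega
      · omega
      · rw [e]
      · omega
    rcases (hI J).2 with ⟨hp, -⟩ | ⟨hp, -⟩ | ⟨hp, -⟩
    · exact ⟨J, le_rfl, hp⟩
    · exact ⟨J + 1 + 1, by omega, step1 _ (step2 _ hp)⟩
    · exact ⟨J + 1, by omega, step1 _ hp⟩
  obtain ⟨j, hj, hp0, hT⟩ := exists_trig hβ hb hs hs1 hh hG hI hS J' hph
  rcases hS j with ⟨-, hno, -⟩ | ⟨-, n, hn, hA0, e0⟩ | ⟨hp, -⟩ | ⟨hp, -⟩
  · exact absurd hT hno
  · have hp1 : (S (j + 1)).ph = 1 := by rw [e0]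
    have hn1 : (S (j + 1)).n = n := by rw [e0]
    rcases hS (j + 1) with ⟨hp, -⟩ | ⟨hp, -⟩ | ⟨-, hA1, e1⟩ | ⟨hp, -⟩
    · omega
    · omega
    · have hp2 : (S (j + 1 + 1)).ph = 2 := by rw [e1]
      have hn2 : (S (j + 1 + 1)).n = n := by rw [e1]; exact hn1
      rcases hS (j + 1 + 1) with ⟨hp, -⟩ | ⟨hp, -⟩ | ⟨hp, -⟩ | ⟨-, hA2, -⟩
      · omega
      · omega
      · omega
      · exact ⟨j, by omega, n, hn.1, hn.2.1, hA0, by rw [hA1, hn1], by rw [← hn2]; exact hA2⟩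
    · omega
  · omega
  · omega

lemma length_of_mem_alph {m : ℕ} {W : Finset (Fin m → ℕ+)} {A : ℕ → ℕ} {j : ℕ} {w : List ℕ}
    (hw : w ∈ alph W A j) : w.length = if A j = 0 then m + 2 else 1 := by
  by_cases h : A j = 0
  · simp only [alph, h, if_true, Finset.mem_map, Function.Embedding.coeFn_mk] at hw
    obtain ⟨v, hv, rfl⟩ := hw
    simp [h, length_blk]
  · simp only [alph, h, if_false, Finset.mem_map, Function.Embedding.coeFn_mk] at hw
    obtain ⟨a, ha, rfl⟩ := hw
    simp [h]

lemma eq_single_of_mem_alph {m : ℕ} {W : Finset (Fin m → ℕ+)} {A : ℕ → ℕ} {j : ℕ} {w : List ℕ}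
    (hw : w ∈ alph W A j) (h : A j ≠ 0) : ∃ a, A j ≤ a ∧ w = [a] := by
  simp only [alph, h, if_false, Finset.mem_map, Function.Embedding.coeFn_mk,
    Finset.mem_Ico] at hw
  obtain ⟨a, ha, rfl⟩ := hw
  exact ⟨a, ha.1, rfl⟩

lemma limSet_subset_F2 {φ : ℕ → ℝ} {β s : ℝ} (hβ : 1 < β) {m : ℕ} {W : Finset (Fin m → ℕ+)}
    {A d : ℕ → ℕ} (D : Moran s) (hD : D.Lt = alph W A) (hd0 : d 0 = 0)
    (hd : ∀ j, d (j + 1) = d j + (if A j = 0 then m + 2 else 1))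
    (hT : ∀ J, ∃ j ≥ J, ∃ n, d j + 2 ≤ n ∧ φ n ≤ β ^ n ∧ A j = bigDig (β ^ n) (1 - s) ∧
        A (j + 1) = bigDig (β ^ n) s ∧ A (j + 2) = bigDig (β ^ n) (1 - s)) :
    limSet D.Lt ⊆ F2 φ := by
  rintro x ⟨ω, hω, hx⟩
  have hlen : ∀ j, (preW ω j).length = d j := by
    intro j
    induction j with
    | zero => simp [preW, hd0]
    | succ j ih =>
      have := hω j
      rw [hD] at this
      rw [preW, List.length_append, ih, length_of_mem_alph this, hd]
  have hdj : ∀ j, j ≤ d j := by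
    intro j
    induction j with
    | zero => omega
    | succ j ih => rw [hd]; split_ifs <;> omega
  have hxu : ∀ j, ∃ u ∈ Set.Ioo (0 : ℝ) 1, x = cylMap (preW ω j) u := by
    intro j
    obtain ⟨u, hu, e⟩ := hx j
    exact ⟨u, ⟨hu.1, by linarith [hu.2]⟩, e⟩
  have horb : ∀ n, gaussMap^[n] x ∈ Set.Ioo (0 : ℝ) 1 := by
    intro n
    obtain ⟨u, hu, e⟩ := hxu n
    have hp := D.posW_preW hω n
    rw [e, gaussMap_iter_cylMap hp hu (by rw [hlen]; exact hdj n)]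
    exact cylMap_mem_Ioo (fun b hb => hp b (List.mem_of_mem_drop hb)) hu
  refine ⟨horb 0, irrational_of_orbit horb, Set.infinite_of_forall_exists_gt fun N => ?_⟩
  obtain ⟨j, hj, n, hn, hφ, h0, h1, h2⟩ := hT N
  have hM : (1 : ℝ) ≤ β ^ n := one_le_pow₀ hβ.le
  have hM0 : (0 : ℝ) < β ^ n := by linarith
  have hmem : ∀ i, ω i ∈ alph W A i := fun i => hD ▸ hω i
  have hne : ∀ x, bigDig (β ^ n) x ≠ 0 := fun x => by have := two_le_bigDig (x := x) hM; omega
  obtain ⟨a, ha, ea⟩ := eq_single_of_mem_alph (hmem j) (h0 ▸ hne _)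
  obtain ⟨a', ha', ea'⟩ := eq_single_of_mem_alph (hmem (j + 1)) (h1 ▸ hne _)
  obtain ⟨a'', ha'', ea''⟩ := eq_single_of_mem_alph (hmem (j + 2)) (h2 ▸ hne _)
  have hpre : preW ω (j + 3) = preW ω j ++ [a, a', a''] := by
    simp only [preW, ea, ea', ea'', List.append_assoc, List.cons_append, List.nil_append]
  obtain ⟨u, hu, e⟩ := hxu (j + 3)
  have hp := D.posW_preW hω (j + 3)
  rw [hpre] at e hp
  have hl := hlen j
  have p0 : pq x (d j + 1) = a := by
    rw [e, pq_cylMap hp hu (by simp [hl])]; simp [← hl]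
  have p1 : pq x (d j + 1 + 1) = a' := by
    rw [e, pq_cylMap hp hu (by simp [hl])]; simp [← hl]
  have p2 : pq x (d j + 1 + 1 + 1) = a'' := by
    rw [e, pq_cylMap hp hu (by simp [hl])]; simp [← hl]
  have b0 : (β ^ n) ^ (1 - s) ≤ a := (le_bigDig _ _).trans (by rw [← h0]; exact_mod_cast ha)
  have b1 : (β ^ n) ^ s ≤ a' := (le_bigDig _ _).trans (by rw [← h1]; exact_mod_cast ha')
  have b2 : (β ^ n) ^ (1 - s) ≤ a'' := (le_bigDig _ _).trans (by rw [← h2]; exact_mod_cast ha'')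
  have hprod : (β ^ n) ^ (1 - s) * (β ^ n) ^ s = β ^ n := by
    rw [← Real.rpow_add hM0, sub_add_cancel, Real.rpow_one]
  refine ⟨n, ⟨d j + 1, d j + 1 + 1, by omega, by omega, by omega, by omega, by omega, ?_, ?_⟩,
    by have := hdj j; omega⟩
  · rw [p0, p1]
    calc φ n ≤ β ^ n := hφ
      _ = _ := hprod.symm
      _ ≤ _ := by gcongr
  · rw [p1, p2, mul_comm]
    calc φ n ≤ β ^ n := hφ
      _ = _ := hprod.symm
      _ ≤ _ := by gcongr

/-- Lower bound: any `s` in `[1/2, 1]` with positive pressure is at most the dimension. -/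
theorem le_dimH_F2 {φ : ℕ → ℝ} (hpos : ∀ n, 0 < φ n) {B : ℝ} (hB1 : 1 < B)
    (hB : Filter.atTop.liminf (fun n : ℕ => ((Real.log (φ n) / n : ℝ) : EReal))
      ≤ ((Real.log B : ℝ) : EReal)) {s : ℝ} (hs : 1 / 2 ≤ s) (hs1 : s ≤ 1)
    (hp : ¬ pressure B s ≤ 0) : ENNReal.ofReal s ≤ dimH (F2 φ) := by
  obtain ⟨b, hb, m, W, hW⟩ := exists_blocks hB1 hs hs1 hp
  obtain ⟨β, hβ1, hβ2⟩ := exists_between hb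
  have hβ : 1 < β := hB1.trans hβ1
  have hb0 : 0 < b := by linarith
  have hG : ∃ᶠ n in atTop, φ n ≤ β ^ n := by
    have h1 : Filter.atTop.liminf (fun n : ℕ => ((Real.log (φ n) / n : ℝ) : EReal)) <
        ((Real.log β : ℝ) : EReal) :=
      hB.trans_lt (EReal.coe_lt_coe_iff.2 (Real.log_lt_log (by linarith) hβ1))
    refine ((frequently_lt_of_liminf_lt (by isBoundedDefault) h1).and_eventually
      (eventually_gt_atTop 0)).mono ?_
    rintro n ⟨h2, hn⟩
    have hn' : (0 : ℝ) < n := by exact_mod_cast hn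
    rw [EReal.coe_lt_coe_iff, div_lt_iff₀ hn', mul_comm, ← Real.log_pow] at h2
    exact ((Real.log_lt_log_iff (hpos n) (by positivity)).1 h2).le
  obtain ⟨A, ρ, d, hρ0, hd0, hρ, hd, hρC, hA, hρA, hT⟩ :=
    exists_schedule hβ hβ2 hs hs1 (by omega : 0 < m + 2) hG
  have hκ : 0 < b ^ (-(fe s * ((m + 2 : ℕ) : ℝ))) := by positivity
  have hW' : 4 ≤ b ^ (-(fe s * ((m + 2 : ℕ) : ℝ))) *
      ∑ v ∈ W, (contQ (blk v) : ℝ) ^ (-(2 * s)) := by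
    calc (4 : ℝ) = b ^ (-(fe s * ((m + 2 : ℕ) : ℝ))) *
          (4 * b ^ (fe s * ((m + 2 : ℕ) : ℝ))) := by
          rw [mul_left_comm, ← Real.rpow_add hb0]; simp
      _ ≤ _ := by gcongr
  obtain ⟨D, hD⟩ := exists_moran hs hs1 hκ hW' hρ0 hρ hρC hA hρA
  exact (D.le_dimH (by linarith)).trans (dimH_mono (limSet_subset_F2 hβ D hD hd0 hd hT))

/-! ### The dimension formula -/

theorem dimH_F2_of_liminf_eq_log (φ : ℕ → ℝ) (hpos : ∀ n, 0 < φ n) (B : ℝ)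
    (hB1 : 1 < B)
    (hB : Filter.atTop.liminf (fun n : ℕ => ((Real.log (φ n) / n : ℝ) : EReal))
      = ((Real.log B : ℝ) : EReal)) :
    dimH (F2 φ) = ENNReal.ofReal (sB B) := by
  have hbdd : BddBelow {s : ℝ | 0 ≤ s ∧ pressure B s ≤ 0} := ⟨0, fun s hs => hs.1⟩
  have hmem1 : (1 : ℝ) ∈ {s : ℝ | 0 ≤ s ∧ pressure B s ≤ 0} :=
    ⟨zero_le_one, pressure_one_le hB1⟩
  have hle1 : sB B ≤ 1 := csInf_le hbdd hmem1
  have hlow : 1 / 2 ≤ sB B := le_csInf ⟨1, hmem1⟩ fun s hs =>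
    (half_lt_of_pressure hB1 hs.1 hs.2).le
  apply le_antisymm
  · rcases hle1.lt_or_eq with hlt | heq
    · refine le_of_forall_gt_imp_ge_of_dense fun c hc => ?_
      rcases eq_or_ne c ⊤ with rfl | hc'
      · exact le_top
      have h1 : sB B < c.toReal := (ENNReal.ofReal_lt_iff_lt_toReal (by linarith) hc').1 hc
      obtain ⟨s, hs1, hs2⟩ := exists_between (lt_min h1 hlt)
      obtain ⟨s₀, hs₀, hs₀s⟩ := exists_lt_of_csInf_lt ⟨1, hmem1⟩ hs1
      refine (dimH_F2_le hpos hB1 hB.ge hs₀.1 hs₀.2 hs₀s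
        (hs2.trans_le (min_le_right _ _))).trans ?_
      exact ENNReal.ofReal_le_of_le_toReal (hs2.le.trans (min_le_left _ _))
    · rw [heq, ENNReal.ofReal_one, ← Real.dimH_univ]
      exact dimH_mono (Set.subset_univ _)
  · have hnot : ∀ r, 0 ≤ r → r < sB B → ¬ pressure B r ≤ 0 := fun r h0 hr h =>
      absurd (csInf_le hbdd ⟨h0, h⟩) (not_le.2 hr)
    have hhalf : ENNReal.ofReal (1 / 2) ≤ dimH (F2 φ) :=
      le_dimH_F2 hpos hB1 hB.le le_rfl (by norm_num) fun h =>
        lt_irrefl _ (half_lt_of_pressure hB1 (by norm_num) h)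
    refine le_of_forall_lt_imp_le_of_dense fun c hc => ?_
    have hc' : c ≠ ⊤ := hc.ne_top
    have h1 : c.toReal < sB B := (ENNReal.lt_ofReal_iff_toReal_lt hc').1 hc
    rcases le_or_gt c.toReal (1 / 2) with h2 | h2
    · exact ((ENNReal.le_ofReal_iff_toReal_le hc' (by norm_num)).2 h2).trans hhalf
    · rw [← ENNReal.ofReal_toReal hc']
      exact le_dimH_F2 hpos hB1 hB.le h2.le (h1.le.trans hle1)
        (hnot _ ENNReal.toReal_nonneg h1)
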